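/- arXiv:2512.13445 — 3 statements merged into one kernel-verified Lean document; each statement's English description precedes it below -/
import Mathlib

section
/- Let F be a field with more than k elements, let k ≥ 4 and n ≥ k + 2 with n + k odd, and let T be a linear map on the space of n×k matrices over F. Then det_{n,k}(T(X)) = det_{n,k}(X) for all n×k matrices X if and only if there exist an n×n matrix A and a k×k matrix B over F satisfying det_{n,k}(A(|d]) · det(B) = sgn(d) for every k-element subset d of {1,...,n}, and a linear map φ from M_{n×k}(F) to W_{n,k}, such that T(X) = AXB + φ(X) for all n×k matrices X. -/
open Classical in
noncomputable def cullisDet {F : Type*} [Field F] {n k : ℕ}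
    (X : Matrix (Fin n) (Fin k) F) : F :=
  ∑ f : Fin k → Fin n, if StrictMono f then
    (-1 : F) ^ (∑ j : Fin k, ((f j : ℕ) - (j : ℕ))) * (X.submatrix f id).det
  else 0

/-! For `n + k` odd, a telescoping sum of signs shows that a constant column makes the Cullis
determinant vanish. The determinant is therefore an alternating form `ω` on `V = F ^ (n - 1)`,
evaluated at the consecutive row differences of the columns, and a linear map changes it only up to
a part with constant rows.

Contracting the Cullis form with `e_a + e_{a+1}` picks out the `a`-th row difference. Doing so twice
shows that if every value of `ω` with arguments `u`, `v` vanished, then the `2 × 2` minors of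
`(u, v)` would vanish on non-adjacent rows and agree on adjacent ones, and the Plücker relation on
four consecutive rows would make all of them zero. So `ω` separates independent pairs of vectors.

This forces the directions along which `ω` is affine to be elements of rank at most one of
`F ^ k ⊗ V`; conversely `c ⊗ v` is such a direction. Preservers of `ω` permute these directions, so
they preserve rank at most one, and `k < dim V` excludes everything but the maps `B ⊗ A`. -/

open Module Function
open scoped Matrix

section Parallel

variable {F V W : Type*} [Field F] [AddCommGroup V] [Module F V] [AddCommGroup W] [Module F W]

theorem exists_smul_eq_of_not_linearIndependent {x y : V} (hx : x ≠ 0)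
    (h : ¬ LinearIndependent F ![x, y]) : ∃ a : F, a • x = y := by
  rw [LinearIndependent.pair_iff' hx] at h
  push Not at h
  exact h

theorem apply_eq_zero_of_forall_not_linearIndependent {f g : V →ₗ[F] W}
    (h : ∀ v, ¬ LinearIndependent F ![f v, g v]) {u v : V} (hu : g u = 0)
    (huv : LinearIndependent F ![f u, f v]) : g v = 0 := by
  have indep := LinearIndependent.pair_iff.1 huv
  have huv' : f u + f v ≠ 0 := fun h0 => one_ne_zero (indep 1 1 (by simpa using h0)).1
  obtain ⟨a, ha⟩ := exists_smul_eq_of_not_linearIndependent (huv.ne_zero 1) (h v)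
  obtain ⟨b, hb⟩ := exists_smul_eq_of_not_linearIndependent
    (by simpa only [map_add] using huv') (h (u + v))
  have hab : b • f u + (b - a) • f v = 0 := by
    rw [sub_smul, add_sub, ← smul_add, ← map_add, hb, map_add, hu, zero_add, sub_eq_zero]
    exact ha.symm
  obtain ⟨hb0, hba⟩ := indep b (b - a) hab
  rw [← ha, ← sub_eq_zero.1 hba, hb0, zero_smul]

theorem exists_eq_smul_of_forall_not_linearIndependent {f g : V →ₗ[F] W}
    (h : ∀ v, ¬ LinearIndependent F ![f v, g v]) {u₁ u₂ : V}
    (hu : LinearIndependent F ![f u₁, f u₂]) : ∃ c : F, g = c • f := by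
  have hne : f u₁ ≠ 0 := hu.ne_zero 0
  obtain ⟨c, hc⟩ := exists_smul_eq_of_not_linearIndependent hne (h u₁)
  have h' : ∀ v, ¬ LinearIndependent F ![f v, (g - c • f) v] := fun v => by
    have : (g - c • f) v = (-c) • f v + g v := by
      rw [LinearMap.sub_apply, LinearMap.smul_apply, neg_smul, neg_add_eq_sub]
    rw [this, LinearIndependent.pair_add_smul_right_iff]
    exact h v
  have hu₁ : (g - c • f) u₁ = 0 := sub_eq_zero.2 hc.symm
  have hu₂ : (g - c • f) u₂ = 0 := apply_eq_zero_of_forall_not_linearIndependent h' hu₁ hu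
  refine ⟨c, sub_eq_zero.1 (LinearMap.ext fun v => ?_)⟩
  by_cases hv : LinearIndependent F ![f u₁, f v]
  · exact apply_eq_zero_of_forall_not_linearIndependent h' hu₁ hv
  · obtain ⟨a, ha⟩ := exists_smul_eq_of_not_linearIndependent hne hv
    have hv₂ : LinearIndependent F ![f u₁, f (v + u₂)] := by
      rwa [map_add, ← ha, LinearIndependent.pair_add_smul_right_iff]
    rw [LinearMap.zero_apply, ← apply_eq_zero_of_forall_not_linearIndependent h' hu₁ hv₂, map_add,
      hu₂, add_zero]

end Parallel

section Minor

variable {F ι : Type*} [Field F]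

/-- The `2 × 2` minor, in rows `i` and `j`, of the matrix with columns `u` and `v`. -/
def minor (u v : ι → F) (i j : ι) : F :=
  u i * v j - u j * v i

theorem exists_minor_ne_zero {u v : ι → F} (h : LinearIndependent F ![u, v]) :
    ∃ i j, minor u v i j ≠ 0 := by
  by_contra! h0
  obtain ⟨i, hi⟩ : ∃ i, u i ≠ 0 := Function.ne_iff.1 (h.ne_zero 0)
  refine hi (neg_eq_zero.1 (LinearIndependent.pair_iff.1 h (v i) (-u i) (funext fun j => ?_)).2)
  have := h0 i j
  simp only [minor] at this
  simp only [Pi.add_apply, Pi.smul_apply, smul_eq_mul, Pi.zero_apply]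
  linear_combination -this

end Minor

section RankOne

variable {F V ι : Type*} [Field F] [AddCommGroup V] [Module F V]

/-- A family of vectors, seen as an element of `F^ι ⊗ V`, has rank at most one. -/
def PairwiseDependent (F : Type*) {V ι : Type*} [Field F] [AddCommGroup V] [Module F V]
    (x : ι → V) : Prop :=
  ∀ i j, ¬ LinearIndependent F ![x i, x j]

theorem not_linearIndependent_of_pairwiseDependent_add {b b' : ι → F} {x x' : V}
    (hb : LinearIndependent F ![b, b'])
    (h : PairwiseDependent F fun i => b i • x + b' i • x') : ¬ LinearIndependent F ![x, x'] := by
  intro hx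
  obtain ⟨i, j, hij⟩ := exists_minor_ne_zero hb
  refine h i j ((LinearIndependent.pair_add_smul_add_smul_iff ..).2 ⟨hx, ?_⟩)
  rwa [mul_comm (b' i), ← sub_ne_zero]

theorem exists_one_lt_finrank_range_proj [Fintype ι] [FiniteDimensional F V]
    {W : Type*} [AddCommGroup W] [Module F W]
    {L : V →ₗ[F] (ι → W)} (hL : Injective L) (hcard : Fintype.card ι < finrank F V) :
    ∃ i, 1 < finrank F (LinearMap.range (LinearMap.proj i ∘ₗ L)) := by
  by_contra! h
  let L' : V →ₗ[F] ∀ i, LinearMap.range (LinearMap.proj i ∘ₗ L) :=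
    LinearMap.pi fun i => (LinearMap.proj i ∘ₗ L).rangeRestrict
  have hL' : Injective L' := fun v w hvw =>
    hL (funext fun i => congrArg Subtype.val (congrFun hvw i))
  have := LinearMap.finrank_le_finrank_of_injective hL'
  rw [finrank_pi_fintype] at this
  refine hcard.not_ge (this.trans ?_)
  simpa using Finset.sum_le_sum fun i (_ : i ∈ Finset.univ) => h i

theorem exists_linearIndependent_apply [Fintype ι] [FiniteDimensional F V]
    {W : Type*} [AddCommGroup W] [Module F W]
    {L : V →ₗ[F] (ι → W)} (hL : Injective L) (hcard : Fintype.card ι < finrank F V) :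
    ∃ i u u', LinearIndependent F ![L u i, L u' i] := by
  obtain ⟨i, hi⟩ := exists_one_lt_finrank_range_proj hL hcard
  have := Module.nontrivial_of_finrank_pos (R := F) (zero_lt_one.trans hi)
  obtain ⟨⟨_, u, rfl⟩, hu⟩ := exists_ne (0 : LinearMap.range (LinearMap.proj i ∘ₗ L))
  obtain ⟨⟨_, u', rfl⟩, hu'⟩ := exists_linearIndependent_pair_of_one_lt_finrank hi hu
  refine ⟨i, u, u', LinearIndependent.pair_iff.2 fun s t hst => ?_⟩
  exact LinearIndependent.pair_iff.1 hu' s t (Subtype.ext hst)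

theorem exists_eq_smul_of_forall_pairwiseDependent [Fintype ι] [FiniteDimensional F V]
    {W : Type*} [AddCommGroup W] [Module F W]
    {L : V →ₗ[F] (ι → W)} (hinj : Injective L) (hcard : Fintype.card ι < finrank F V)
    (hL : ∀ v, PairwiseDependent F (L v)) :
    ∃ (b : ι → F) (A : V →ₗ[F] W), ∀ v i, L v i = b i • A v := by
  obtain ⟨i₀, u, u', hu⟩ := exists_linearIndependent_apply hinj hcard
  have hsmul : ∀ i, ∃ c : F, LinearMap.proj i ∘ₗ L = c • (LinearMap.proj i₀ ∘ₗ L) := fun i =>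
    exists_eq_smul_of_forall_not_linearIndependent (fun v => hL v i₀ i) hu
  choose b hb using hsmul
  exact ⟨b, (LinearMap.proj i₀ : (ι → W) →ₗ[F] W) ∘ₗ L, fun v i => LinearMap.congr_fun (hb i) v⟩

theorem exists_single_apply_eq_smul [Fintype ι] [DecidableEq ι] [FiniteDimensional F V]
    {S : (ι → V) →ₗ[F] (ι → V)} (hinj : Injective S) (hcard : Fintype.card ι < finrank F V)
    (hS : ∀ (c : ι → F) (v : V), PairwiseDependent F (S fun i => c i • v)) (j : ι) :
    ∃ (b : ι → F) (A : V →ₗ[F] V), Bijective A ∧ ∀ v i, S (Pi.single j v) i = b i • A v := by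
  have hinj' : Injective (S ∘ₗ LinearMap.single F _ j) :=
    hinj.comp (LinearMap.ker_eq_bot.1 (LinearMap.ker_single ..))
  obtain ⟨b, A, hA⟩ := exists_eq_smul_of_forall_pairwiseDependent hinj' hcard
    fun v => by simpa only [Pi.single_apply_smul] using! hS (Pi.single j 1) v
  have hA_inj : Injective A := fun v w hvw =>
    hinj' (funext fun i => by rw [hA, hA, hvw])
  exact ⟨b, A, ⟨hA_inj, LinearMap.surjective_of_injective hA_inj⟩, hA⟩

theorem linearIndependent_of_single_apply_eq [DecidableEq ι] [Nontrivial V]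
    {S : (ι → V) →ₗ[F] (ι → V)} (hinj : Injective S) {j l : ι} (hjl : j ≠ l) {b b' : ι → F}
    {A A' : V →ₗ[F] V} (hA : Surjective A) (hA' : Surjective A')
    (hb : ∀ v i, S (Pi.single j v) i = b i • A v)
    (hb' : ∀ v i, S (Pi.single l v) i = b' i • A' v) : LinearIndependent F ![b, b'] := by
  obtain ⟨z, hz⟩ := exists_ne (0 : V)
  refine LinearIndependent.pair_iff.2 fun s t hst => ?_
  obtain ⟨x, hx⟩ := hA (s • z)
  obtain ⟨y, hy⟩ := hA' (t • z)
  have hxy : S (Pi.single j x + Pi.single l y) = 0 := funext fun i => by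
    have := congrFun hst i
    rw [map_add, Pi.add_apply, hb, hb', hx, hy, smul_smul, smul_smul, ← add_smul, mul_comm,
      mul_comm (b' i)]
    simpa [hz] using this
  have hxy0 := (map_eq_zero_iff S hinj).1 hxy
  have hx0 : x = 0 := by simpa [hjl] using congrFun hxy0 j
  have hy0 : y = 0 := by simpa [hjl.symm] using congrFun hxy0 l
  rw [hx0, map_zero, eq_comm, smul_eq_zero_iff_left hz] at hx
  rw [hy0, map_zero, eq_comm, smul_eq_zero_iff_left hz] at hy
  exact ⟨hx, hy⟩

theorem exists_eq_smul_of_single_apply_eq [DecidableEq ι] (hV : 1 < finrank F V)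
    {S : (ι → V) →ₗ[F] (ι → V)} (hinj : Injective S)
    (hS : ∀ (c : ι → F) (v : V), PairwiseDependent F (S fun i => c i • v))
    {j l : ι} {b b' : ι → F} {A A' : V →ₗ[F] V} (hA : Bijective A) (hA' : Surjective A')
    (hb : ∀ v i, S (Pi.single j v) i = b i • A v)
    (hb' : ∀ v i, S (Pi.single l v) i = b' i • A' v) (hjl : j ≠ l) : ∃ c : F, A' = c • A := by
  have := Module.nontrivial_of_finrank_pos (R := F) (zero_lt_one.trans hV)
  have hbb' := linearIndependent_of_single_apply_eq hinj hjl hA.2 hA' hb hb'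
  have hdep : ∀ v, ¬ LinearIndependent F ![A v, A' v] := fun v => by
    refine not_linearIndependent_of_pairwiseDependent_add hbb' ?_
    have hsum : S (fun i => (Pi.single j 1 + Pi.single l 1 : ι → F) i • v) =
        fun i => b i • A v + b' i • A' v := by
      simp only [Pi.add_apply, add_smul, Pi.single_apply_smul]
      rw [← Pi.add_def, map_add]
      exact funext fun i => congrArg₂ (· + ·) (hb v i) (hb' v i)
    exact hsum ▸ hS _ v
  obtain ⟨u, hu⟩ := exists_ne (0 : V)
  obtain ⟨u', hu'⟩ := exists_linearIndependent_pair_of_one_lt_finrank hV hu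
  refine exists_eq_smul_of_forall_not_linearIndependent (u₁ := u) (u₂ := u') hdep ?_
  refine LinearIndependent.pair_iff.2 fun s t hst => LinearIndependent.pair_iff.1 hu' s t ?_
  exact (map_eq_zero_iff A hA.1).1 (by simpa using hst)

theorem exists_eq_sum_smul_of_forall_pairwiseDependent [Fintype ι] [FiniteDimensional F V]
    {S : (ι → V) →ₗ[F] (ι → V)} (hinj : Injective S) (hcard : Fintype.card ι < finrank F V)
    (hS : ∀ (c : ι → F) (v : V), PairwiseDependent F (S fun i => c i • v)) :
    ∃ (A : V →ₗ[F] V) (B : ι → ι → F), ∀ x i, S x i = ∑ j, B j i • A (x j) := by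
  classical
  rcases isEmpty_or_nonempty ι with _ | ⟨⟨j₀⟩⟩
  · exact ⟨0, 0, fun x i => isEmptyElim i⟩
  have hV : 1 < finrank F V := lt_of_le_of_lt (Fintype.card_pos_iff.2 ⟨j₀⟩) hcard
  choose b A hA hbA using exists_single_apply_eq_smul hinj hcard hS
  have hprop : ∀ j, ∃ c : F, A j = c • A j₀ := fun j => by
    obtain rfl | hj := eq_or_ne j j₀
    · exact ⟨1, (one_smul _ _).symm⟩
    exact exists_eq_smul_of_single_apply_eq hV hinj hS (hA j₀) (hA j).2 (hbA j₀) (hbA j) hj.symm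
  choose c hc using hprop
  refine ⟨A j₀, fun j i => c j * b j i, fun x i => ?_⟩
  calc S x i = ∑ j, S (Pi.single j (x j)) i := by
        rw [← Finset.sum_apply, ← map_sum, Finset.univ_sum_single]
    _ = ∑ j, (c j * b j i) • A j₀ (x j) :=
        Finset.sum_congr rfl fun j _ => by
          rw [hbA, hc, LinearMap.smul_apply, smul_smul, mul_comm]

end RankOne

section Alternating

variable {F V ι : Type*} [Field F] [AddCommGroup V] [Module F V] {ω : V [⋀^ι]→ₗ[F] F}

/-- Any two linearly independent vectors are among the arguments of a nonzero value of `ω`;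
equivalently, contracting `ω` with a nonzero decomposable bivector never gives zero. -/
def SeparatesPairs (ω : V [⋀^ι]→ₗ[F] F) : Prop :=
  ∀ ⦃u v : V⦄, LinearIndependent F ![u, v] →
    ∃ (x : ι → V) (i j : ι), i ≠ j ∧ x i = u ∧ x j = v ∧ ω x ≠ 0

theorem SeparatesPairs.exists_apply_ne_zero [Finite ι] (hω : SeparatesPairs ω) {u v : V}
    (huv : LinearIndependent F ![u, v]) {i j : ι} (hij : i ≠ j) :
    ∃ x : ι → V, x i = u ∧ x j = v ∧ ω x ≠ 0 := by
  classical
  have := Fintype.ofFinite ι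
  obtain ⟨x, i', j', hij', rfl, rfl, hx⟩ := hω huv
  obtain ⟨σ, rfl, rfl⟩ := MulAction.is_two_pretransitive_iff.1
    (Equiv.Perm.isMultiplyPretransitive ι 2) hij hij'
  exact ⟨x ∘ σ, rfl, rfl, by rwa [ω.map_perm, smul_ne_zero_iff_ne]⟩

theorem SeparatesPairs.eq_zero_of_forall_map_add [Finite ι] [Nontrivial ι]
    (hω : SeparatesPairs ω) (hV : 1 < finrank F V) {N : ι → V} (hN : ∀ x, ω (x + N) = ω x) :
    N = 0 := by
  by_contra h
  obtain ⟨i, hi⟩ := Function.ne_iff.1 h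
  obtain ⟨j, hij⟩ := exists_ne i
  obtain ⟨v, hv⟩ := exists_linearIndependent_pair_of_one_lt_finrank hV hi
  obtain ⟨x, hxi, -, hx⟩ := hω.exists_apply_ne_zero hv hij.symm
  refine hx ?_
  rw [← sub_add_cancel x N, hN]
  exact ω.map_coord_zero i (by simp [hxi])

/-- Along the line through `x` in direction `N`, the form `ω` is a polynomial of degree at most one
(this is stated through its values, so that it is meaningful over small fields). -/
def IsAffineDirection (ω : V [⋀^ι]→ₗ[F] F) (N : ι → V) : Prop :=
  ∀ (x : ι → V) (t : F), ω (x + t • N) = (1 - t) * ω x + t * ω (x + N)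

theorem map_add_smul_eq_add_linearDeriv [Fintype ι] [DecidableEq ι] (x : ι → V) (c : ι → F)
    (v : V) : ω (x + fun i => c i • v) = ω x + ω.linearDeriv x fun i => c i • v := by
  refine (ω.toMultilinearMap.map_add_eq_map_add_linearDeriv_add x _).trans ?_
  refine add_eq_left.2 (Finset.sum_eq_zero fun s hs => ?_)
  obtain ⟨i, hi, j, hj, hij⟩ := Finset.one_lt_card.1 (Finset.mem_filter.1 hs).2
  refine ω.map_linearDependent _ fun hind => hij ?_
  have hne := hind.ne_zero j
  simp only [Finset.piecewise_eq_of_mem _ _ _ hj] at hne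
  refine hind.eq_of_smul_apply_eq_smul_apply (c j) (c i) i j (smul_ne_zero_iff.1 hne).1 ?_
  rw [Finset.piecewise_eq_of_mem _ _ _ hi, Finset.piecewise_eq_of_mem _ _ _ hj]
  exact smul_comm ..

theorem isAffineDirection_smul [Finite ι] (c : ι → F) (v : V) :
    IsAffineDirection ω fun i => c i • v := fun x t => by
  classical
  have := Fintype.ofFinite ι
  have ht : (t • fun i => c i • v) = fun i => (t * c i) • v := funext fun i => smul_smul ..
  have hderiv := (ω.linearDeriv x).map_smul t fun i => c i • v
  rw [ht] at hderiv
  rw [ht, map_add_smul_eq_add_linearDeriv, map_add_smul_eq_add_linearDeriv, hderiv, smul_eq_mul]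
  ring

theorem IsAffineDirection.map {N : ι → V} (hN : IsAffineDirection ω N)
    {S : (ι → V) →ₗ[F] (ι → V)} (hS : ∀ x, ω (S x) = ω x) (hsurj : Surjective S) :
    IsAffineDirection ω (S N) := fun y t => by
  obtain ⟨x, rfl⟩ := hsurj y
  rw [← map_smul, ← map_add, ← map_add, hS, hS, hS]
  exact hN x t

theorem IsAffineDirection.pairwiseDependent [Finite ι] {N : ι → V} (hN : IsAffineDirection ω N)
    (hω : SeparatesPairs ω) (hF : 2 < Cardinal.mk F) : PairwiseDependent F N := by
  classical
  intro i j hind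
  have hij : i ≠ j := fun h => hind.injective.ne Fin.zero_ne_one (congrArg N h)
  obtain ⟨t, ht⟩ := Cardinal.exists_notMem_of_length_lt [0, (1 : F)] (by simpa using hF)
  rw [List.mem_pair, not_or] at ht
  obtain ⟨x, hxi, hxj, hx⟩ := hω.exists_apply_ne_zero hind hij
  let y : ι → V := update (update (x - t • N) i (-N i)) j 0
  have hy : ω y = 0 := ω.map_coord_zero j (update_self ..)
  have hyN : ω (y + N) = 0 := ω.map_coord_zero i (by simp [y, hij])
  have hyt : y + t • N = update (update x i ((t - 1) • x i)) j (t • x j) := by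
    ext l
    obtain rfl | hlj := eq_or_ne l j
    · simp [y, hxj]
    obtain rfl | hli := eq_or_ne l i
    · simp [y, hlj, hxi, sub_smul, neg_add_eq_sub]
    · simp [y, hlj, hli]
  have hyt' : ω (y + t • N) = t * ((t - 1) * ω x) := by
    rw [hyt, ω.map_update_smul, update_comm hij, update_eq_self, ω.map_update_smul,
      update_eq_self, smul_eq_mul, smul_eq_mul]
  have hline := hN y t
  rw [hy, hyN, hyt', mul_zero, mul_zero, add_zero] at hline
  exact mul_ne_zero ht.1 (mul_ne_zero (sub_ne_zero.2 ht.2) hx) hline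

theorem SeparatesPairs.injective_of_preserves [Finite ι] [Nontrivial ι] (hω : SeparatesPairs ω)
    (hV : 1 < finrank F V) {S : (ι → V) →ₗ[F] (ι → V)} (hS : ∀ x, ω (S x) = ω x) :
    Injective S :=
  (injective_iff_map_eq_zero S).2 fun x hx =>
    hω.eq_zero_of_forall_map_add hV fun y => by rw [← hS, map_add, hx, add_zero, hS]

theorem exists_eq_sum_smul_of_preserves [Fintype ι] [Nontrivial ι] (hω : SeparatesPairs ω)
    (hF : 2 < Cardinal.mk F) (hcard : Fintype.card ι < finrank F V)
    {S : (ι → V) →ₗ[F] (ι → V)} (hS : ∀ x, ω (S x) = ω x) :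
    ∃ (A : V →ₗ[F] V) (B : Matrix ι ι F), ∀ x i, S x i = ∑ j, B j i • A (x j) := by
  have hV : 1 < finrank F V := Fintype.one_lt_card.trans hcard
  have := Module.finite_of_finrank_pos (zero_lt_one.trans hV)
  have hinj : Injective S := hω.injective_of_preserves hV hS
  exact exists_eq_sum_smul_of_forall_pairwiseDependent hinj hcard fun c v =>
    ((isAffineDirection_smul c v).map hS (LinearMap.surjective_of_injective hinj)).pairwiseDependent
      hω hF

theorem exists_eq_comp_of_preserves [Finite ι] [Nontrivial ι] [FiniteDimensional F V]
    {E : Type*} [AddCommGroup E] [Module F E] (hω : SeparatesPairs ω) (hV : 1 < finrank F V)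
    {Q R : E →ₗ[F] (ι → V)} (hQ : Surjective Q) (hQR : ∀ x, ω (R x) = ω (Q x)) :
    ∃ S : (ι → V) →ₗ[F] (ι → V), (∀ x, ω (S x) = ω x) ∧ R = S ∘ₗ Q := by
  obtain ⟨s, hs⟩ := Q.exists_rightInverse_of_surjective (LinearMap.range_eq_top.2 hQ)
  have hQs : ∀ y, Q (s y) = y := LinearMap.congr_fun hs
  have hS : ∀ y, ω (R (s y)) = ω y := fun y => by rw [hQR, hQs]
  have hsurj : Surjective (R ∘ₗ s) :=
    LinearMap.surjective_of_injective (hω.injective_of_preserves hV hS)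
  have hker : ∀ w, Q w = 0 → R w = 0 := fun w hw =>
    hω.eq_zero_of_forall_map_add hV fun y => by
      obtain ⟨z, rfl⟩ := hsurj y
      rw [LinearMap.comp_apply, ← map_add, hQR, map_add, hw, add_zero, hQR]
  refine ⟨R ∘ₗ s, hS, LinearMap.ext fun x => ?_⟩
  rw [LinearMap.comp_apply, LinearMap.comp_apply, ← sub_eq_zero, ← map_sub]
  exact hker _ (by rw [map_sub, hQs, sub_self])

end Alternating

section AlternatingGeneral

variable {R M N : Type*} [CommRing R] [AddCommGroup M] [Module R M] [AddCommGroup N] [Module R N]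

theorem alternatingMap_map_add_of_forall_eq_zero {ι : Type*} [Finite ι] {ω : M [⋀^ι]→ₗ[R] N}
    {K : Set M} (hω : ∀ x i, x i ∈ K → ω x = 0) {x w : ι → M} (hw : ∀ i, w i ∈ K) :
    ω (w + x) = ω x := by
  classical
  have := Fintype.ofFinite ι
  refine (ω.toMultilinearMap.map_add_univ w x).trans ?_
  rw [Finset.sum_eq_single_of_mem ∅ (Finset.mem_univ _), Finset.piecewise_empty]
  · rfl
  · intro s _ hs
    obtain ⟨i, hi⟩ := Finset.nonempty_iff_ne_empty.2 hs
    exact hω _ i (by rw [Finset.piecewise_eq_of_mem _ _ _ hi]; exact hw i)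

theorem exists_alternatingMap_compLinearMap_eq {F U V W ι : Type*} [Field F] [AddCommGroup U]
    [Module F U] [AddCommGroup V] [Module F V] [AddCommGroup W] [Module F W] [Finite ι]
    {ω : U [⋀^ι]→ₗ[F] W} {p : U →ₗ[F] V} (hp : Surjective p)
    (hω : ∀ x i, x i ∈ LinearMap.ker p → ω x = 0) :
    ∃ ω' : V [⋀^ι]→ₗ[F] W, ω'.compLinearMap p = ω := by
  obtain ⟨s, hs⟩ := p.exists_rightInverse_of_surjective (LinearMap.range_eq_top.2 hp)
  refine ⟨ω.compLinearMap s, AlternatingMap.ext fun x => ?_⟩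
  have hker : ∀ i, s (p (x i)) - x i ∈ LinearMap.ker p := fun i => by
    rw [LinearMap.mem_ker, map_sub, ← LinearMap.comp_apply, hs, LinearMap.id_apply, sub_self]
  refine Eq.trans (congrArg ω (funext fun i => (sub_add_cancel (s (p (x i))) (x i)).symm)) ?_
  exact alternatingMap_map_add_of_forall_eq_zero (K := LinearMap.ker p) hω hker

theorem alternatingMap_sum_apply {ι κ : Type*} (s : Finset κ) (ω : κ → M [⋀^ι]→ₗ[R] N)
    (x : ι → M) : (∑ a ∈ s, ω a) x = ∑ a ∈ s, ω a x :=
  map_sum (AddMonoidHom.mk' (fun g : M [⋀^ι]→ₗ[R] N => g x) fun _ _ => rfl) ω s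

theorem alternatingMap_ext_strictMono {κ : Type*} [LinearOrder κ] {k : ℕ} (e : Basis κ R M)
    {f g : M [⋀^Fin k]→ₗ[R] N}
    (h : ∀ v : Fin k → κ, StrictMono v → (f fun j => e (v j)) = g fun j => e (v j)) : f = g := by
  refine e.ext_alternating fun v hv => smul_left_cancel (Tuple.sort v).sign ?_
  rw [← f.map_perm, ← g.map_perm]
  exact h _ ((Tuple.monotone_sort v).strictMono_of_injective (hv.comp (Tuple.sort v).injective))

end AlternatingGeneral

section StrictMono

variable {n k : ℕ}

theorem val_le_of_strictMono {f : Fin k → Fin n} (hf : StrictMono f) (j : Fin k) :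
    (j : ℕ) ≤ f j := by
  simpa using Finset.card_le_card_of_injOn (s := Finset.Iio j) (t := Finset.Iio (f j)) f
    (fun i hi => by simpa using hf (by simpa using hi)) hf.injective.injOn

theorem eq_of_strictMono_of_range_subset {f g : Fin k → Fin n} (hf : StrictMono f)
    (hg : StrictMono g) (h : Set.range f ⊆ Set.range g) : f = g := by
  refine (hf.range_inj hg).1 (Set.eq_of_subset_of_ncard_le h ?_)
  rw [← Set.image_univ, ← Set.image_univ, Set.ncard_image_of_injective _ hf.injective,
    Set.ncard_image_of_injective _ hg.injective]

end StrictMono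

section CullisForm

variable {F : Type*} [Field F] {n k : ℕ}

open Classical in
/-- The Cullis determinant as an alternating form in the columns of the matrix. -/
noncomputable def cullisAlt (F : Type*) [Field F] (n k : ℕ) : (Fin n → F) [⋀^Fin k]→ₗ[F] F :=
  ∑ f : Fin k → Fin n, if StrictMono f then
    (-1 : F) ^ (∑ j : Fin k, ((f j : ℕ) - (j : ℕ))) •
      Matrix.detRowAlternating.compLinearMap (LinearMap.funLeft F F f)
  else 0

theorem cullisAlt_col (X : Matrix (Fin n) (Fin k) F) : cullisAlt F n k X.col = cullisDet X := by
  rw [cullisAlt, cullisDet, alternatingMap_sum_apply]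
  refine Finset.sum_congr rfl fun f _ => ?_
  split_ifs
  · exact congrArg _ (Matrix.det_transpose (X.submatrix f id))
  · rfl

theorem cullisDet_mul (X : Matrix (Fin n) (Fin k) F) (B : Matrix (Fin k) (Fin k) F) :
    cullisDet (X * B) = cullisDet X * B.det := by
  rw [cullisDet, cullisDet, Finset.sum_mul]
  refine Finset.sum_congr rfl fun f _ => ?_
  rw [ite_mul, zero_mul, mul_assoc, ← Matrix.det_mul,
    Matrix.submatrix_mul X B f id id bijective_id, Matrix.submatrix_id_id]

theorem cullisAlt_single_eq_cullisDet (g : Fin k → Fin n) :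
    cullisAlt F n k (fun j => Pi.single (g j) 1) =
      cullisDet ((1 : Matrix (Fin n) (Fin n) F).submatrix id g) := by
  rw [← cullisAlt_col]
  refine congrArg _ (funext fun j => funext fun i => ?_)
  simp [Matrix.one_apply, Pi.single_apply]

theorem cullisAlt_single_of_strictMono {g : Fin k → Fin n} (hg : StrictMono g) :
    cullisAlt F n k (fun j => Pi.single (g j) 1) = (-1) ^ ∑ j, ((g j : ℕ) - (j : ℕ)) := by
  rw [cullisAlt_single_eq_cullisDet, cullisDet, Finset.sum_eq_single_of_mem g (Finset.mem_univ _)]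
  · rw [if_pos hg, Matrix.submatrix_submatrix, CompTriple.comp_eq, CompTriple.comp_eq,
      Matrix.submatrix_one _ hg.injective, Matrix.det_one, mul_one]
  · intro f _ hfg
    refine ite_eq_right_iff.2 fun hf => ?_
    obtain ⟨_, ⟨i, rfl⟩, hi⟩ :=
      Set.not_subset.1 fun h => hfg (eq_of_strictMono_of_range_subset hf hg h)
    rw [Matrix.det_eq_zero_of_row_eq_zero i, mul_zero]
    exact fun j => Matrix.one_apply_ne fun h => hi ⟨j, h.symm⟩

end CullisForm

section CullisSign

variable {n k : ℕ}

/-- The Cullis determinant of the columns `e_{c 0}, …, e_{c (k - 1)}`, see `cullisAlt_single`; it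
vanishes if `c` is not injective. -/
def cullisSign (c : Fin k → Fin n) : ℤ :=
  (∏ j, (-1) ^ ((c j : ℕ) + j)) * ∏ i, ∏ j ∈ Finset.Ioi i, Int.sign ((c j : ℤ) - c i)

theorem cullisSign_comp_perm (c : Fin k → Fin n) (σ : Equiv.Perm (Fin k)) :
    cullisSign (c ∘ σ) = Equiv.Perm.sign σ * cullisSign c := by
  have hpow : ∏ j, (-1 : ℤ) ^ ((c (σ j) : ℕ) + j) = ∏ j, (-1) ^ ((c j : ℕ) + j) := by
    simp only [pow_add, Finset.prod_mul_distrib]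
    rw [Equiv.prod_comp σ fun j => (-1 : ℤ) ^ (c j : ℕ)]
  have hinv := σ.prod_Ioi_comp_eq_sign_mul_prod (f := fun i j => Int.sign ((c j : ℤ) - c i))
    fun i j => by rw [← Int.sign_neg, neg_sub]
  exact (congrArg₂ (· * ·) hpow hinv).trans (mul_left_comm _ _ _)

theorem cullisSign_of_strictMono {c : Fin k → Fin n} (hc : StrictMono c) :
    cullisSign c = (-1) ^ ∑ j, ((c j : ℕ) - (j : ℕ)) := by
  have hinv : ∏ i, ∏ j ∈ Finset.Ioi i, Int.sign ((c j : ℤ) - c i) = 1 := by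
    refine Finset.prod_eq_one fun i _ => Finset.prod_eq_one fun j hj =>
      Int.sign_eq_one_of_pos ?_
    have : c i < c j := hc (Finset.mem_Ioi.1 hj)
    omega
  rw [cullisSign, hinv, mul_one, ← Finset.prod_pow_eq_pow_sum]
  refine Finset.prod_congr rfl fun j _ => neg_one_pow_congr ?_
  have := val_le_of_strictMono hc j
  grind

theorem isUnit_cullisSign {c : Fin k → Fin n} (hc : Injective c) : IsUnit (cullisSign c) := by
  refine IsUnit.mul (IsUnit.prod_iff.2 fun _ _ => isUnit_neg_one.pow _)
    (IsUnit.prod_iff.2 fun i _ => IsUnit.prod_iff.2 fun j hj => ?_)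
  have : c j ≠ c i := hc.ne (Finset.mem_Ioi.1 hj).ne'
  rw [Int.isUnit_iff_abs_eq, Int.abs_sign_of_ne_zero]
  omega

theorem cullisSign_eq_zero {c : Fin k → Fin n} (hc : ¬ Injective c) : cullisSign c = 0 := by
  obtain ⟨i, j, hij, hlt⟩ : ∃ i j, c i = c j ∧ i < j := by
    obtain ⟨i, j, hij, hne⟩ := not_injective_iff.1 hc
    exact hne.lt_or_gt.elim (fun h => ⟨i, j, hij, h⟩) fun h => ⟨j, i, hij.symm, h⟩
  refine mul_eq_zero_of_right _ (Finset.prod_eq_zero (Finset.mem_univ i)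
    (Finset.prod_eq_zero (Finset.mem_Ioi.2 hlt) ?_))
  rw [hij, sub_self, Int.sign_zero]

/-- The sign by which a coordinate vector at height `t` changes `cullisSign c` when it is put in
front of the coordinate vectors of `c`, up to the factor `(-1) ^ k`. -/
def insertSign (c : Fin k → Fin n) (t : ℕ) : ℤ :=
  (-1) ^ t * ∏ l, if (c l : ℕ) < t then -1 else 1

theorem insertSign_zero (c : Fin k → Fin n) : insertSign c 0 = 1 := by
  simp [insertSign]

theorem insertSign_last (c : Fin k → Fin n) : insertSign c n = (-1) ^ (n + k) := by
  simp [insertSign, pow_add]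

open Classical in
theorem insertSign_succ {c : Fin k → Fin n} (hc : Injective c) (i : Fin n) :
    insertSign c (i + 1) = if i ∈ Set.range c then insertSign c i else - insertSign c i := by
  have hone : (∏ l, if c l = i then (-1 : ℤ) else 1) = if i ∈ Set.range c then -1 else 1 := by
    split_ifs with hi
    · obtain ⟨l, rfl⟩ := hi
      simp [hc.eq_iff]
    · exact Finset.prod_eq_one fun l _ => if_neg fun h => hi ⟨l, h⟩
  have hsplit : (∏ l, if (c l : ℕ) < i + 1 then (-1 : ℤ) else 1) =
      (∏ l, if (c l : ℕ) < i then (-1 : ℤ) else 1) * ∏ l, if c l = i then (-1 : ℤ) else 1 := by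
    rw [← Finset.prod_mul_distrib]
    refine Finset.prod_congr rfl fun l _ => ?_
    grind
  rw [insertSign, insertSign, hsplit, hone]
  split_ifs <;> ring

open Classical in
theorem cullisSign_cons (i : Fin n) (c : Fin k → Fin n) :
    cullisSign (Fin.cons i c : Fin (k + 1) → Fin n) =
      if i ∈ Set.range c then 0 else (-1) ^ k * (insertSign c i * cullisSign c) := by
  split_ifs with hi
  · obtain ⟨l, rfl⟩ := hi
    exact cullisSign_eq_zero fun h => (Fin.succ_ne_zero l) (h (by simp))
  · have hsign : ∏ l, Int.sign ((c l : ℤ) - i) = ∏ l, if (c l : ℕ) < i then (-1 : ℤ) else 1 := by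
      refine Finset.prod_congr rfl fun l _ => ?_
      have : c l ≠ i := fun h => hi ⟨l, h⟩
      split_ifs
      · exact Int.sign_eq_neg_one_of_neg (by omega)
      · exact Int.sign_eq_one_of_pos (by omega)
    have hpow : ∏ l : Fin k, (-1 : ℤ) ^ ((c l : ℕ) + (l + 1)) =
        (∏ l : Fin k, (-1) ^ ((c l : ℕ) + l)) * (-1) ^ k := by
      simp only [← add_assoc, pow_succ, Finset.prod_mul_distrib, Fin.prod_const]
    simp only [cullisSign, insertSign, Fin.prod_univ_succ, Fin.cons_zero, Fin.cons_succ,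
      Fin.prod_Ioi_zero, Fin.prod_Ioi_succ, Fin.val_zero, Fin.val_succ, hsign, hpow]
    ring

theorem isUnit_insertSign (c : Fin k → Fin n) (t : ℕ) : IsUnit (insertSign c t) :=
  (isUnit_neg_one.pow t).mul (IsUnit.prod_iff.2 fun l _ => by split_ifs <;> simp)

theorem insertSign_removeNth (c : Fin (k + 1) → Fin n) (j : Fin (k + 1)) :
    insertSign (j.removeNth c) (c j) = insertSign c (c j) := by
  rw [insertSign, insertSign, Fin.prod_univ_succAbove _ j, if_neg (lt_irrefl _), one_mul]
  rfl

theorem cullisSign_removeNth {c : Fin (k + 1) → Fin n} (hc : Injective c) (j : Fin (k + 1)) :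
    (-1) ^ (j : ℕ) * cullisSign (j.removeNth c) =
      (-1) ^ k * (insertSign c (c j) * cullisSign c) := by
  classical
  have hj : c j ∉ Set.range (j.removeNth c) := by
    rintro ⟨l, hl⟩
    exact j.succAbove_ne l (hc hl)
  have hsign : (-1) ^ (j : ℕ) * cullisSign c =
      (-1) ^ k * (insertSign c (c j) * cullisSign (j.removeNth c)) := by
    have hcons := cullisSign_cons (c j) (j.removeNth c)
    rwa [if_neg hj, Fin.cons_removeNth_eq_comp_cycleRange_symm, cullisSign_comp_perm,
      Equiv.Perm.sign_symm, Fin.sign_cycleRange, insertSign_removeNth, Units.val_pow_eq_pow_val,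
      Units.val_neg, Units.val_one] at hcons
  have hj_sq := Int.isUnit_mul_self (isUnit_neg_one.pow (j : ℕ))
  have hk_sq := Int.isUnit_mul_self (isUnit_neg_one.pow k)
  have hP_sq := Int.isUnit_mul_self (isUnit_insertSign c (c j))
  linear_combination (-(-1) ^ (j : ℕ) * (-1) ^ k * insertSign c (c j)) * hsign +
    insertSign c (c j) * cullisSign c * (-1) ^ k * hj_sq -
    cullisSign (j.removeNth c) * (-1) ^ (j : ℕ) * (hk_sq + (-1) ^ k * (-1) ^ k * hP_sq)

theorem sum_cullisSign_cons {c : Fin k → Fin n} (hc : Injective c) (hnk : Even (n + k)) :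
    ∑ i : Fin n, cullisSign (Fin.cons i c : Fin (k + 1) → Fin n) = 0 := by
  classical
  have htel : ∑ i : Fin n, (insertSign c i - insertSign c (i + 1)) = 0 := by
    rw [Fin.sum_univ_eq_sum_range fun i => insertSign c i - insertSign c (i + 1),
      Finset.sum_range_sub', insertSign_zero, insertSign_last, hnk.neg_one_pow, sub_self]
  refine (mul_eq_zero.1 ?_).resolve_left (two_ne_zero (α := ℤ))
  calc 2 * ∑ i : Fin n, cullisSign (Fin.cons i c : Fin (k + 1) → Fin n)
      = ∑ i : Fin n, (-1) ^ k * cullisSign c * (insertSign c i - insertSign c (i + 1)) := by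
        rw [Finset.mul_sum]
        refine Finset.sum_congr rfl fun i _ => ?_
        rw [cullisSign_cons, insertSign_succ hc]
        split_ifs <;> ring
    _ = 0 := by rw [← Finset.mul_sum, htel, mul_zero]

end CullisSign

section Contraction

variable {F : Type*} [Field F] {n k : ℕ}

theorem cullisAlt_single (c : Fin k → Fin n) :
    cullisAlt F n k (fun j => Pi.single (c j) 1) = cullisSign c := by
  by_cases hc : Injective c
  · have hmono : StrictMono (c ∘ Tuple.sort c) :=
      (Tuple.monotone_sort c).strictMono_of_injective (hc.comp (Tuple.sort c).injective)
    refine smul_left_cancel (Tuple.sort c).sign ?_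
    rw [← AlternatingMap.map_perm]
    refine (cullisAlt_single_of_strictMono hmono).trans ?_
    rw [Units.smul_def, zsmul_eq_mul, ← Int.cast_mul, ← cullisSign_comp_perm,
      cullisSign_of_strictMono hmono]
    push_cast
    rfl
  · obtain ⟨i, j, hij, hne⟩ := not_injective_iff.1 hc
    rw [cullisSign_eq_zero hc, Int.cast_zero]
    exact AlternatingMap.map_eq_zero_of_eq _ _ (by rw [hij]) hne

/-- The differences of consecutive coordinates; its kernel consists of the constant vectors. -/
def rowDiff (F : Type*) [Field F] (n : ℕ) : (Fin (n + 1) → F) →ₗ[F] (Fin n → F) :=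
  LinearMap.funLeft F F Fin.succ - LinearMap.funLeft F F Fin.castSucc

theorem rowDiff_apply (x : Fin (n + 1) → F) (a : Fin n) :
    rowDiff F n x a = x a.succ - x a.castSucc :=
  rfl

theorem rowDiff_surjective : Surjective (rowDiff F n) := fun y =>
  ⟨Fin.induction 0 fun a s => s + y a, funext fun a => by
    rw [rowDiff_apply, Fin.induction_succ, add_sub_cancel_left]⟩

theorem rowDiff_eq_zero_iff {x : Fin (n + 1) → F} : rowDiff F n x = 0 ↔ ∀ a b, x a = x b := by
  refine ⟨fun h => ?_, fun h => funext fun a => sub_eq_zero.2 (h _ _)⟩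
  have hzero : ∀ a, x a = x 0 := fun a => by
    induction a using Fin.induction with
    | zero => rfl
    | succ a ih => rw [← ih]; exact sub_eq_zero.1 (congrFun h a)
  exact fun a b => (hzero a).trans (hzero b).symm

theorem cullisAlt_vecCons_single (i : Fin n) (c : Fin k → Fin n) :
    cullisAlt F n (k + 1) (Matrix.vecCons (Pi.single i 1) fun j => Pi.single (c j) 1) =
      cullisSign (Fin.cons i c : Fin (k + 1) → Fin n) := by
  rw [← cullisAlt_single]
  exact congrArg _ (funext fun j => Fin.cases rfl (fun _ => rfl) j)

theorem cullisAlt_vecCons_one (hnk : Even (n + k)) (x : Fin k → Fin n → F) :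
    cullisAlt F n (k + 1) (Matrix.vecCons 1 x) = 0 := by
  suffices h : (cullisAlt F n (k + 1)).curryLeft 1 = 0 from congrArg (· x) h
  refine (Pi.basisFun F (Fin n)).ext_alternating fun c hc => ?_
  have hone : (1 : Fin n → F) = ∑ i, Pi.single i 1 := (Finset.univ_sum_single 1).symm
  simp only [hone, map_sum, alternatingMap_sum_apply, AlternatingMap.curryLeft_apply_apply,
    Pi.basisFun_apply, cullisAlt_vecCons_single]
  rw [← Int.cast_sum, sum_cullisSign_cons hc hnk, Int.cast_zero]
  rfl

theorem cullisAlt_eq_zero_of_const (hnk : Odd (n + 1 + k)) (x : Fin k → Fin (n + 1) → F) (i : Fin k)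
    (hi : rowDiff F n (x i) = 0) : cullisAlt F (n + 1) k x = 0 := by
  obtain _ | k := k
  · exact i.elim0
  have hx : x i = x i 0 • 1 := funext fun a => by
    simpa using rowDiff_eq_zero_iff.1 hi a 0
  rw [← i.insertNth_self_removeNth x, AlternatingMap.map_insertNth, hx,
    AlternatingMap.map_vecCons_smul, cullisAlt_vecCons_one (by grind), smul_zero, smul_zero]

/-- The vector dual to `rowDiff` at position `a`: contracting the Cullis form with it gives the
coordinate `a` of `rowDiff`, see `cullisAlt_adjSum`. -/
def adjSum (F : Type*) [Field F] (a : Fin n) : Fin (n + 1) → F :=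
  Pi.single a.castSucc 1 + Pi.single a.succ 1

open Classical in
theorem sum_single_mul {c : Fin k → Fin n} (hc : Injective c) (b : Fin n) (f : Fin n → F) :
    ∑ j, (Pi.single (c j) 1 : Fin n → F) b * f (c j) = if b ∈ Set.range c then f b else 0 := by
  split_ifs with hb
  · obtain ⟨l, rfl⟩ := hb
    simp [Pi.single_apply, hc.eq_iff]
  · exact Finset.sum_eq_zero fun j _ => by rw [Pi.single_eq_of_ne fun h => hb ⟨j, h.symm⟩, zero_mul]

theorem cullisSign_cons_adj {c : Fin (k + 1) → Fin (n + 1)} (hc : Injective c) (a : Fin n) :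
    ((cullisSign (Fin.cons a.castSucc c : Fin (k + 2) → Fin (n + 1)) +
      cullisSign (Fin.cons a.succ c : Fin (k + 2) → Fin (n + 1)) : ℤ) : F) =
    ∑ j : Fin (k + 1), (-1) ^ (j : ℕ) *
      (rowDiff F n (Pi.single (c j) 1) a * cullisSign (j.removeNth c)) := by
  classical
  have hj (j : Fin (k + 1)) : (-1) ^ (j : ℕ) *
      (rowDiff F n (Pi.single (c j) 1) a * cullisSign (j.removeNth c)) =
      (-1) ^ k * cullisSign c *
        ((Pi.single (c j) 1 : Fin (n + 1) → F) a.succ * insertSign c (c j) -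
          (Pi.single (c j) 1 : Fin (n + 1) → F) a.castSucc * insertSign c (c j)) := by
    have h := congrArg (Int.cast : ℤ → F) (cullisSign_removeNth hc j)
    push_cast at h
    rw [rowDiff_apply]
    linear_combination ((Pi.single (c j) 1 : Fin (n + 1) → F) a.succ -
      (Pi.single (c j) 1 : Fin (n + 1) → F) a.castSucc) * h
  simp only [hj]
  rw [← Finset.mul_sum, Finset.sum_sub_distrib, sum_single_mul hc _ fun i => (insertSign c i : F),
    sum_single_mul hc _ fun i => (insertSign c i : F), cullisSign_cons, cullisSign_cons,
    show insertSign c a.succ = _ from insertSign_succ hc a.castSucc]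
  split_ifs <;> push_cast <;> ring

theorem cullisAlt_adjSum (a : Fin n) (x : Fin (k + 1) → Fin (n + 1) → F) :
    cullisAlt F (n + 1) (k + 2) (Matrix.vecCons (adjSum F a) x) =
      ∑ j : Fin (k + 1), (-1) ^ (j : ℕ) *
        (rowDiff F n (x j) a * cullisAlt F (n + 1) k (j.removeNth x)) := by
  suffices h : (cullisAlt F (n + 1) (k + 2)).curryLeft (adjSum F a) =
      AlternatingMap.alternatizeUncurryFin
        ((LinearMap.proj a ∘ₗ rowDiff F n).smulRight (cullisAlt F (n + 1) k)) by
    refine (congrArg (· x) h).trans ?_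
    rw [AlternatingMap.alternatizeUncurryFin_apply]
    simp
  refine (Pi.basisFun F (Fin (n + 1))).ext_alternating fun c hc => ?_
  have hremove (j : Fin (k + 1)) : cullisAlt F (n + 1) k
      (j.removeNth fun i => (Pi.single (c i) 1 : Fin (n + 1) → F)) =
        cullisSign (j.removeNth c) := cullisAlt_single _
  have hsign := cullisSign_cons_adj (F := F) hc a
  rw [Int.cast_add, ← cullisAlt_vecCons_single, ← cullisAlt_vecCons_single,
    ← AlternatingMap.map_vecCons_add] at hsign
  simp only [Pi.basisFun_apply, AlternatingMap.alternatizeUncurryFin_apply]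
  refine hsign.trans ?_
  simp [hremove]

end Contraction

section Minors

variable {F : Type*} [Field F]

theorem minor_mul_minor {ι : Type*} (u v : ι → F) (i j k l : ι) :
    minor u v i j * minor u v k l =
      minor u v i k * minor u v j l - minor u v i l * minor u v j k := by
  simp only [minor]
  ring

theorem minor_eq_zero_of_lt {n : ℕ} {u v : Fin n → F}
    (h : ∀ a b, a < b → minor u v a b = 0) (a b : Fin n) : minor u v a b = 0 := by
  obtain hab | rfl | hab := lt_trichotomy a b
  · exact h a b hab
  · simp only [minor]
    ring
  · have := h b a hab
    simp only [minor] at this ⊢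
    linear_combination -this

theorem minor_eq_zero_of_forall_adj {n : ℕ} (hn : 4 ≤ n) {u v : Fin n → F}
    (hfar : ∀ a b : Fin n, (a : ℕ) + 1 < b → minor u v a b = 0)
    (hadj : ∀ a b c : Fin n, (a : ℕ) + 1 = b → (b : ℕ) + 1 = c → minor u v a b = minor u v b c)
    (a b : Fin n) : minor u v a b = 0 := by
  have hfirst (i : ℕ) : ∀ hi : i + 1 < n,
      minor u v ⟨i, by omega⟩ ⟨i + 1, hi⟩ = minor u v ⟨0, by omega⟩ ⟨1, by omega⟩ := by
    induction i with
    | zero => exact fun _ => rfl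
    | succ i ih => exact fun hi => (hadj _ _ _ rfl rfl).symm.trans (ih (by omega))
  have hzero : minor u v ⟨0, by omega⟩ ⟨1, by omega⟩ = 0 := by
    have h := minor_mul_minor u v ⟨0, by omega⟩ ⟨1, by omega⟩ ⟨2, by omega⟩ ⟨3, by omega⟩
    rw [hfirst 2, hfar ⟨0, _⟩ ⟨2, _⟩ (by simp), hfar ⟨0, _⟩ ⟨3, _⟩ (by simp), zero_mul, zero_mul,
      sub_zero] at h
    exact mul_self_eq_zero.1 h
  refine minor_eq_zero_of_lt (fun a b hab => ?_) a b
  obtain h | h := (Nat.succ_le_of_lt hab).lt_or_eq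
  · exact hfar a b h
  · have hb : b = ⟨a + 1, by omega⟩ := Fin.ext h.symm
    rw [hb, ← hzero]
    exact hfirst a _

end Minors

section CullisSeparates

variable {F : Type*} [Field F] {n k : ℕ}

theorem removeNth_zero_vecCons {α : Type*} (x : α) (y : Fin n → α) :
    (0 : Fin (n + 1)).removeNth (Matrix.vecCons x y) = y :=
  rfl

theorem removeNth_succ_vecCons {α : Type*} (x : α) (y : Fin (n + 1) → α) (j : Fin (n + 1)) :
    j.succ.removeNth (Matrix.vecCons x y) = Matrix.vecCons x (j.removeNth y) :=
  funext fun i => Fin.cases rfl (fun i => by simp [Fin.removeNth]) i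

theorem cullisAlt_adjSum_vecCons {a : Fin n} (m : Fin (n + 1) → F) {z : Fin k → Fin (n + 1) → F}
    (hz : ∀ l, rowDiff F n (z l) a = 0) :
    cullisAlt F (n + 1) (k + 2) (Matrix.vecCons (adjSum F a) (Matrix.vecCons m z)) =
      rowDiff F n m a * cullisAlt F (n + 1) k z := by
  rw [cullisAlt_adjSum, Fin.sum_univ_succ, Finset.sum_eq_zero]
  · simp
  · intro l _
    simp [hz]

theorem cullisAlt_adjSum_adjSum {a b : Fin n} (m m' : Fin (n + 1) → F)
    {z : Fin k → Fin (n + 1) → F} (ha : ∀ l, rowDiff F n (z l) a = 0)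
    (hb : ∀ l, rowDiff F n (z l) b = 0) :
    cullisAlt F (n + 1) (k + 4) (Matrix.vecCons (adjSum F a) (Matrix.vecCons (adjSum F b)
        (Matrix.vecCons m (Matrix.vecCons m' z)))) =
      rowDiff F n (adjSum F b) a *
          cullisAlt F (n + 1) (k + 2) (Matrix.vecCons m (Matrix.vecCons m' z)) +
        minor (rowDiff F n m) (rowDiff F n m') b a * cullisAlt F (n + 1) k z := by
  rw [cullisAlt_adjSum, Fin.sum_univ_succ, Fin.sum_univ_succ, Fin.sum_univ_succ,
    Finset.sum_eq_zero]
  · simp only [removeNth_zero_vecCons, removeNth_succ_vecCons, cullisAlt_adjSum_vecCons _ hb,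
      Matrix.cons_val_zero, Matrix.cons_val_succ, minor, Fin.val_zero, Fin.val_succ]
    ring
  · intro l _
    simp [ha]

theorem rowDiff_adjSum_of_lt {a b : Fin n} (h : (a : ℕ) + 1 < b) :
    rowDiff F n (adjSum F a) b = 0 := by
  have hne : b.castSucc ≠ a.succ ∧ b.succ ≠ a.succ ∧ b.castSucc ≠ a.castSucc ∧
      b.succ ≠ a.castSucc := by
    simp only [ne_eq, Fin.ext_iff, Fin.val_succ, Fin.val_castSucc]
    omega
  simp [rowDiff_apply, adjSum, hne]

theorem rowDiff_adjSum_of_add_one_eq {a b : Fin n} (h : (a : ℕ) + 1 = b) :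
    rowDiff F n (adjSum F b) a = 1 ∧ rowDiff F n (adjSum F a) b = -1 := by
  have heq : b.castSucc = a.succ := Fin.ext h.symm
  have hne : a.castSucc ≠ a.succ ∧ a.castSucc ≠ b.succ ∧ b.succ ≠ a.castSucc ∧ b.succ ≠ a.succ ∧
      a.succ ≠ b.succ := by
    simp only [ne_eq, Fin.ext_iff, Fin.val_succ, Fin.val_castSucc]
    omega
  simp [rowDiff_apply, adjSum, heq, hne]

theorem exists_injective_forall_notMem (s : Finset (Fin n)) (h : k + s.card ≤ n) :
    ∃ c : Fin k → Fin n, Injective c ∧ ∀ l, c l ∉ s := by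
  obtain ⟨t, hts, ht⟩ := Finset.exists_subset_card_eq (s := sᶜ) (n := k) (by
    rw [Finset.card_compl, Fintype.card_fin]
    omega)
  exact ⟨t.orderEmbOfFin ht, (t.orderEmbOfFin ht).injective, fun l =>
    Finset.mem_compl.1 (hts (t.orderEmbOfFin_mem ht l))⟩

theorem exists_cullisAlt_ne_zero (s : Finset (Fin n)) (p : Finset (Fin (n + 1)))
    (hp : k + p.card ≤ n + 1) (hs : ∀ a ∈ s, a.castSucc ∈ p ∧ a.succ ∈ p) :
    ∃ z : Fin k → Fin (n + 1) → F,
      (∀ l, ∀ a ∈ s, rowDiff F n (z l) a = 0) ∧ cullisAlt F (n + 1) k z ≠ 0 := by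
  obtain ⟨c, hc, hcp⟩ := exists_injective_forall_notMem p hp
  refine ⟨fun l => Pi.single (c l) 1, fun l a ha => ?_, ?_⟩
  · have hne : a.succ ≠ c l ∧ a.castSucc ≠ c l :=
      ⟨fun h => hcp l (h ▸ (hs a ha).2), fun h => hcp l (h ▸ (hs a ha).1)⟩
    simp [rowDiff_apply, hne]
  · rw [cullisAlt_single]
    exact ((isUnit_cullisSign hc).map (Int.castRingHom F)).ne_zero

theorem minor_rowDiff_eq_zero (hk : k + 4 ≤ n + 1) {m m' : Fin (n + 1) → F}
    (h : ∀ p q z, cullisAlt F (n + 1) (k + 4)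
      (Matrix.vecCons p (Matrix.vecCons q (Matrix.vecCons m (Matrix.vecCons m' z)))) = 0)
    {a b : Fin n} (hab : (a : ℕ) + 1 < b) : minor (rowDiff F n m) (rowDiff F n m') a b = 0 := by
  obtain ⟨z, hz, hzero⟩ := exists_cullisAlt_ne_zero (F := F) (k := k) {a, b}
    {a.castSucc, a.succ, b.castSucc, b.succ} (by grw [Finset.card_le_four]; exact hk) (by simp)
  have key := cullisAlt_adjSum_adjSum m m' (fun l => hz l b (by simp)) fun l => hz l a (by simp)
  rw [h, rowDiff_adjSum_of_lt hab, zero_mul, zero_add] at key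
  exact (mul_eq_zero.1 key.symm).resolve_right hzero

theorem minor_rowDiff_eq_minor_rowDiff (hk : k + 4 ≤ n + 1) {m m' : Fin (n + 1) → F}
    (h : ∀ p q z, cullisAlt F (n + 1) (k + 4)
      (Matrix.vecCons p (Matrix.vecCons q (Matrix.vecCons m (Matrix.vecCons m' z)))) = 0)
    {a b c : Fin n} (hab : (a : ℕ) + 1 = b) (hbc : (b : ℕ) + 1 = c) :
    minor (rowDiff F n m) (rowDiff F n m') a b = minor (rowDiff F n m) (rowDiff F n m') b c := by
  obtain ⟨z, hz, hzero⟩ := exists_cullisAlt_ne_zero (F := F) (k := k) {a, b, c}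
    {a.castSucc, a.succ, b.succ, c.succ} (by grw [Finset.card_le_four]; exact hk) (by
      have hb : b.castSucc = a.succ := Fin.ext hab.symm
      have hc : c.castSucc = b.succ := Fin.ext hbc.symm
      simp [hb, hc])
  have hbc' := cullisAlt_adjSum_adjSum m m' (fun l => hz l b (by simp)) fun l => hz l c (by simp)
  have hba := cullisAlt_adjSum_adjSum m m' (fun l => hz l b (by simp)) fun l => hz l a (by simp)
  rw [h, (rowDiff_adjSum_of_add_one_eq hab).2] at hba
  rw [h, (rowDiff_adjSum_of_add_one_eq hbc).1] at hbc'
  refine mul_right_cancel₀ hzero ?_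
  simp only [minor] at hba hbc' ⊢
  linear_combination -hba - hbc'

theorem not_linearIndependent_rowDiff (hk : k + 4 ≤ n) {m m' : Fin (n + 1) → F}
    (h : ∀ p q z, cullisAlt F (n + 1) (k + 4)
      (Matrix.vecCons p (Matrix.vecCons q (Matrix.vecCons m (Matrix.vecCons m' z)))) = 0) :
    ¬ LinearIndependent F ![rowDiff F n m, rowDiff F n m'] := fun hli => by
  obtain ⟨a, b, hab⟩ := exists_minor_ne_zero hli
  exact hab (minor_eq_zero_of_forall_adj (by omega)
    (fun _ _ => minor_rowDiff_eq_zero (by omega) h)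
    (fun _ _ _ => minor_rowDiff_eq_minor_rowDiff (by omega) h) a b)

theorem separatesPairs_of_compLinearMap_rowDiff {ω : (Fin n → F) [⋀^Fin k]→ₗ[F] F}
    (hω : ω.compLinearMap (rowDiff F n) = cullisAlt F (n + 1) k) (hk : 4 ≤ k) (hkn : k ≤ n) :
    SeparatesPairs ω := by
  obtain ⟨k, rfl⟩ := Nat.exists_eq_add_of_le' hk
  intro u v huv
  obtain ⟨m, rfl⟩ := rowDiff_surjective u
  obtain ⟨m', rfl⟩ := rowDiff_surjective v
  by_contra! hcon
  refine not_linearIndependent_rowDiff hkn (fun p q z => ?_) huv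
  rw [← hω]
  exact hcon _ ⟨2, by omega⟩ ⟨3, by omega⟩ (by simp) rfl rfl

end CullisSeparates

section Preservers

variable {F : Type*} [Field F] {n k : ℕ}

theorem exists_compLinearMap_rowDiff_eq (hnk : Odd (n + 1 + k)) :
    ∃ ω : (Fin n → F) [⋀^Fin k]→ₗ[F] F,
      ω.compLinearMap (rowDiff F n) = cullisAlt F (n + 1) k :=
  exists_alternatingMap_compLinearMap_eq rowDiff_surjective
    fun x i => cullisAlt_eq_zero_of_const hnk x i

/-- The differences of consecutive rows of a matrix, as a family of columns. -/
def colRowDiff (F : Type*) [Field F] (n k : ℕ) :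
    Matrix (Fin (n + 1)) (Fin k) F →ₗ[F] (Fin k → Fin n → F) :=
  LinearMap.pi fun j => rowDiff F n ∘ₗ LinearMap.pi fun i => Matrix.entryLinearMap F F i j

theorem colRowDiff_apply (X : Matrix (Fin (n + 1)) (Fin k) F) (j : Fin k) :
    colRowDiff F n k X j = rowDiff F n (X.col j) :=
  rfl

theorem colRowDiff_surjective : Surjective (colRowDiff F n k) := fun y => by
  choose x hx using fun j => rowDiff_surjective (y j)
  exact ⟨(Matrix.of x).transpose, funext hx⟩

theorem colRowDiff_eq_iff {X Y : Matrix (Fin (n + 1)) (Fin k) F} :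
    colRowDiff F n k X = colRowDiff F n k Y ↔ ∀ i i', (X - Y) i = (X - Y) i' := by
  rw [← sub_eq_zero, ← map_sub, funext_iff]
  simp only [colRowDiff_apply, Pi.zero_apply, rowDiff_eq_zero_iff, Matrix.col_apply]
  exact ⟨fun h i i' => funext fun j => h j i i', fun h j i i' => congrFun (h i i') j⟩

theorem cullisDet_submatrix_one (d : Finset (Fin n)) (hd : d.card = k) :
    cullisDet ((1 : Matrix (Fin n) (Fin n) F).submatrix id (d.orderEmbOfFin hd)) =
      (-1) ^ ((∑ i ∈ d, (i : ℕ)) - ∑ j : Fin k, (j : ℕ)) := by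
  have hmono := (d.orderEmbOfFin hd).strictMono
  have hsum : ∑ i ∈ d, (i : ℕ) = ∑ j, (d.orderEmbOfFin hd j : ℕ) := by
    conv_lhs => rw [← Finset.image_orderEmbOfFin_univ d hd]
    exact Finset.sum_image hmono.injective.injOn
  rw [← cullisAlt_single_eq_cullisDet, cullisAlt_single_of_strictMono hmono,
    Finset.sum_tsub_distrib _ fun j _ => val_le_of_strictMono hmono j, hsum]

theorem exists_eq_orderEmbOfFin {g : Fin k → Fin n} (hg : StrictMono g) :
    ∃ (d : Finset (Fin n)) (hd : d.card = k), g = d.orderEmbOfFin hd := by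
  have hd : (Finset.univ.image g).card = k := by
    rw [Finset.card_image_of_injective _ hg.injective, Finset.card_univ, Fintype.card_fin]
  exact ⟨_, hd, Finset.orderEmbOfFin_unique hd
    (fun j => Finset.mem_image_of_mem g (Finset.mem_univ j)) hg⟩

theorem submatrix_id_eq_mul_submatrix_one (A : Matrix (Fin n) (Fin n) F) (g : Fin k → Fin n) :
    A.submatrix id g = A * (1 : Matrix (Fin n) (Fin n) F).submatrix id g := by
  conv_lhs => rw [← A.mul_one, Matrix.submatrix_mul A 1 id id g bijective_id, A.submatrix_id_id]

theorem smul_cullisAlt_compLinearMap_col (A : Matrix (Fin n) (Fin n) F) (b : F)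
    (X : Matrix (Fin n) (Fin k) F) :
    (b • (cullisAlt F n k).compLinearMap A.mulVecLin) X.col = cullisDet (A * X) * b := by
  rw [mul_comm, ← cullisAlt_col]
  rfl

theorem forall_cullisDet_mul_eq_iff (A : Matrix (Fin n) (Fin n) F) (b : F) :
    (∀ X : Matrix (Fin n) (Fin k) F, cullisDet (A * X) * b = cullisDet X) ↔
      ∀ (d : Finset (Fin n)) (hd : d.card = k),
        cullisDet (A.submatrix id (fun j => d.orderEmbOfFin hd j)) * b =
          (-1 : F) ^ ((∑ i ∈ d, (i : ℕ)) - ∑ j : Fin k, (j : ℕ)) := by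
  refine ⟨fun h d hd => ?_, fun h X => ?_⟩
  · rw [submatrix_id_eq_mul_submatrix_one, h, cullisDet_submatrix_one]
  suffices key : b • (cullisAlt F n k).compLinearMap A.mulVecLin = cullisAlt F n k by
    rw [← smul_cullisAlt_compLinearMap_col, key, cullisAlt_col]
  refine alternatingMap_ext_strictMono (Pi.basisFun F (Fin n)) fun g hg => ?_
  obtain ⟨d, hd, rfl⟩ := exists_eq_orderEmbOfFin hg
  simp only [Pi.basisFun_apply]
  rw [cullisAlt_single_eq_cullisDet, cullisDet_submatrix_one, ← h d hd,
    submatrix_id_eq_mul_submatrix_one, ← smul_cullisAlt_compLinearMap_col]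
  refine congrArg _ (funext fun j => funext fun i => ?_)
  simp [Matrix.one_apply, Pi.single_apply]

theorem cullisDet_eq_of_colRowDiff_eq (hnk : Odd (n + 1 + k))
    {X Y : Matrix (Fin (n + 1)) (Fin k) F} (h : colRowDiff F n k X = colRowDiff F n k Y) :
    cullisDet X = cullisDet Y := by
  obtain ⟨ω, hω⟩ := exists_compLinearMap_rowDiff_eq (F := F) hnk
  rw [← cullisAlt_col, ← cullisAlt_col, ← hω]
  exact congrArg ω h

theorem col_toMatrix'_mul_mul (A : (Fin n → F) →ₗ[F] (Fin n → F)) (B : Matrix (Fin k) (Fin k) F)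
    (X : Matrix (Fin n) (Fin k) F) (i : Fin k) :
    (LinearMap.toMatrix' A * X * B).col i = ∑ j, B j i • A (X.col j) := by
  have h : (LinearMap.toMatrix' A * X * B).col i = LinearMap.toMatrix' A *ᵥ (X *ᵥ B.col i) := by
    rw [Matrix.mulVec_mulVec]
    rfl
  rw [h, LinearMap.toMatrix'_mulVec, Matrix.mulVec_eq_sum, map_sum]
  refine Finset.sum_congr rfl fun j _ => ?_
  rw [op_smul_eq_smul, map_smul]
  rfl

theorem exists_colRowDiff_eq_mul_mul (hk : 4 ≤ k) (hkn : k < n) (hnk : Odd (n + 1 + k))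
    (hF : 2 < Cardinal.mk F)
    {T : Matrix (Fin (n + 1)) (Fin k) F →ₗ[F] Matrix (Fin (n + 1)) (Fin k) F}
    (hT : ∀ X, cullisDet (T X) = cullisDet X) :
    ∃ (A : Matrix (Fin (n + 1)) (Fin (n + 1)) F) (B : Matrix (Fin k) (Fin k) F),
      ∀ X, colRowDiff F n k (T X) = colRowDiff F n k (A * X * B) := by
  obtain ⟨ω, hω⟩ := exists_compLinearMap_rowDiff_eq (F := F) hnk
  have hsep := separatesPairs_of_compLinearMap_rowDiff hω hk hkn.le
  have hcullis (X) : ω (colRowDiff F n k X) = cullisDet X := by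
    rw [← cullisAlt_col, ← hω]
    rfl
  have : Nontrivial (Fin k) := Fin.nontrivial_iff_two_le.2 (by omega)
  obtain ⟨S, hS, hTS⟩ := exists_eq_comp_of_preserves (R := colRowDiff F n k ∘ₗ T) hsep
    (by rw [finrank_fin_fun]; omega) colRowDiff_surjective fun X => by
      rw [LinearMap.comp_apply, hcullis, hcullis, hT]
  obtain ⟨A, B, hAB⟩ := exists_eq_sum_smul_of_preserves hsep hF
    (by rw [finrank_fin_fun, Fintype.card_fin]; exact hkn) hS
  obtain ⟨s, hs⟩ := (rowDiff F n).exists_rightInverse_of_surjective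
    (LinearMap.range_eq_top.2 rowDiff_surjective)
  refine ⟨LinearMap.toMatrix' (s ∘ₗ A ∘ₗ rowDiff F n), B, fun X => funext fun i => ?_⟩
  have hsA (x) : rowDiff F n ((s ∘ₗ A ∘ₗ rowDiff F n) x) = A (rowDiff F n x) :=
    LinearMap.congr_fun hs _
  refine ((congrFun (LinearMap.congr_fun hTS X) i).trans (hAB _ i)).trans ?_
  rw [colRowDiff_apply, col_toMatrix'_mul_mul, map_sum]
  simp only [map_smul, hsA, colRowDiff_apply]

theorem forall_cullisDet_eq_iff_exists_mul_mul (hk : 4 ≤ k) (hkn : k < n) (hnk : Odd (n + 1 + k))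
    (hF : 2 < Cardinal.mk F)
    (T : Matrix (Fin (n + 1)) (Fin k) F →ₗ[F] Matrix (Fin (n + 1)) (Fin k) F) :
    (∀ X, cullisDet (T X) = cullisDet X) ↔
      ∃ (A : Matrix (Fin (n + 1)) (Fin (n + 1)) F) (B : Matrix (Fin k) (Fin k) F),
        (∀ X : Matrix (Fin (n + 1)) (Fin k) F, cullisDet (A * X) * B.det = cullisDet X) ∧
        ∀ X, colRowDiff F n k (T X) = colRowDiff F n k (A * X * B) := by
  refine ⟨fun hT => ?_, fun ⟨A, B, hAB, hT⟩ X => ?_⟩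
  · obtain ⟨A, B, hAB⟩ := exists_colRowDiff_eq_mul_mul hk hkn hnk hF hT
    refine ⟨A, B, fun X => ?_, hAB⟩
    rw [← cullisDet_mul, ← cullisDet_eq_of_colRowDiff_eq hnk (hAB X), hT]
  · rw [cullisDet_eq_of_colRowDiff_eq hnk (hT X), cullisDet_mul, hAB]

end Preservers

theorem stmt0_general {F : Type*} [Field F] {n k : ℕ} (hk : 4 ≤ k) (hn : k + 2 ≤ n)
    (hodd : Odd (n + k)) (hF : 2 < Cardinal.mk F)
    (T : Matrix (Fin n) (Fin k) F →ₗ[F] Matrix (Fin n) (Fin k) F) :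
    (∀ X, cullisDet (T X) = cullisDet X) ↔
      ∃ (A : Matrix (Fin n) (Fin n) F) (B : Matrix (Fin k) (Fin k) F)
        (φ : Matrix (Fin n) (Fin k) F →ₗ[F] Matrix (Fin n) (Fin k) F),
        (∀ (d : Finset (Fin n)) (hd : d.card = k),
          cullisDet (A.submatrix id (fun j => d.orderEmbOfFin hd j)) * B.det =
            (-1 : F) ^ ((∑ i ∈ d, (i : ℕ)) - ∑ j : Fin k, (j : ℕ))) ∧
        (∀ X (i i' : Fin n), φ X i = φ X i') ∧
        (∀ X, T X = A * X * B + φ X) := by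
  obtain ⟨n, rfl⟩ : ∃ m, n = m + 1 := Nat.exists_eq_succ_of_ne_zero (by omega)
  simp only [forall_cullisDet_eq_iff_exists_mul_mul hk (by omega) hodd hF,
    ← forall_cullisDet_mul_eq_iff, colRowDiff_eq_iff]
  refine exists₂_congr fun A B => ⟨fun ⟨hAB, hT⟩ => ?_, fun ⟨φ, hAB, hφ, hT⟩ => ?_⟩
  · exact ⟨T - mulRightLinearMap (Fin (n + 1)) F B ∘ₗ mulLeftLinearMap (Fin k) F A, hAB, hT,
      fun X => (add_sub_cancel _ _).symm⟩
  · refine ⟨hAB, fun X => ?_⟩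
    rw [hT, add_sub_cancel_left]
    exact hφ X

/-- Theorem 1.2 / Theorem 4.10: description of linear preservers of the Cullis
determinant when `k ≥ 4`, `n ≥ k + 2` and `n + k` is odd. -/
theorem stmt0 {F : Type*} [Field F] {n k : ℕ} (hk : 4 ≤ k) (hn : k + 2 ≤ n)
    (hodd : Odd (n + k)) (hF : (k : Cardinal) < Cardinal.mk F)
    (T : Matrix (Fin n) (Fin k) F →ₗ[F] Matrix (Fin n) (Fin k) F) :
    (∀ X, cullisDet (T X) = cullisDet X) ↔
      ∃ (A : Matrix (Fin n) (Fin n) F) (B : Matrix (Fin k) (Fin k) F)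
        (φ : Matrix (Fin n) (Fin k) F →ₗ[F] Matrix (Fin n) (Fin k) F),
        (∀ (d : Finset (Fin n)) (hd : d.card = k),
          cullisDet (A.submatrix id (fun j => d.orderEmbOfFin hd j)) * B.det =
            (-1 : F) ^ ((∑ i ∈ d, (i : ℕ)) - ∑ j : Fin k, (j : ℕ))) ∧
        (∀ X (i i' : Fin n), φ X i = φ X i') ∧
        (∀ X, T X = A * X * B + φ X) :=
  stmt0_general hk hn hodd (lt_trans (by exact_mod_cast (by omega : 2 < k)) hF) T
end

section
/- Let F be a field and let n ≥ k ≥ 1 with n + k odd, n ≥ 2. Then for every n×k matrix X over F, det_{n,k}(X) = det_{(n-1),k}(L^-(X)). -/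
/-- `L⁻`: subtract the last row from the others and delete it. -/
def Lminus {F : Type*} [Field F] {n k : ℕ}
    (X : Matrix (Fin n) (Fin k) F) : Matrix (Fin (n - 1)) (Fin k) F :=
  fun i j => X ⟨i, by have := i.isLt; omega⟩ j - X ⟨n - 1, by have := i.isLt; omega⟩ j

/-! The Cullis determinant is multilinear in the columns and, like the ordinary determinant, has a
Laplace expansion along each column. Expanding along another column reduces a matrix with a
constant column to the case `k = 1`, where its Cullis determinant is `c * ∑ i < n, (-1) ^ i`; hence
it vanishes when `n + k` is odd. By multilinearity, adding one vector to all rows then changes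
nothing, so the last row may be made zero, and a zero last row may be deleted. -/

section Deletion

open Finset

variable {n k : ℕ}

/-- The total displacement of the rows chosen by `f`, which is the exponent of the sign of the
corresponding minor in `cullisDet`. No subtraction is truncated, since `j ≤ f j`. -/
def displacement (f : Fin k ↪o Fin n) : ℕ := ∑ j, ((f j : ℕ) - (j : ℕ))

/-- The increasing sequence in `Fin n` obtained from `f` by deleting the term `f p` and renumbering
the values so as to skip `f p`: the row choice left in a Laplace expansion. -/
def deleteTerm (f : Fin (k + 1) ↪o Fin (n + 1)) (p : Fin (k + 1)) : Fin k ↪o Fin n :=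
  OrderEmbedding.ofStrictMono
    (fun a => (finSuccAboveOrderIso (f p)).symm
      ⟨f (p.succAbove a), f.injective.ne (p.succAbove_ne a)⟩)
    fun _ _ hab => (finSuccAboveOrderIso (f p)).symm.strictMono
      (f.strictMono (p.strictMono_succAbove hab))

theorem succAbove_deleteTerm (f : Fin (k + 1) ↪o Fin (n + 1)) (p : Fin (k + 1)) (a : Fin k) :
    (f p).succAbove (deleteTerm f p a) = f (p.succAbove a) :=
  congrArg Subtype.val ((finSuccAboveOrderIso (f p)).apply_symm_apply _)

theorem succAbove_image_range_deleteTerm (f : Fin (k + 1) ↪o Fin (n + 1)) (p : Fin (k + 1)) :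
    (f p).succAbove '' Set.range (deleteTerm f p) = Set.range f \ {f p} := by
  calc
    (f p).succAbove '' Set.range (deleteTerm f p) = Set.range (f ∘ p.succAbove) := by
      rw [← Set.range_comp]
      exact congrArg Set.range (funext (succAbove_deleteTerm f p))
    _ = Set.range f \ {f p} := by
      rw [Set.range_comp, Fin.range_succAbove, Set.image_compl_eq_range_sdiff_image f.injective,
        Set.image_singleton]

theorem bijective_apply_deleteTerm :
    Function.Bijective fun x : (Fin (k + 1) ↪o Fin (n + 1)) × Fin (k + 1) =>
      (x.1 x.2, deleteTerm x.1 x.2) := by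
  constructor
  · rintro ⟨f, p⟩ ⟨f', p'⟩ h
    obtain ⟨hp, hg⟩ : f p = f' p' ∧ deleteTerm f p = deleteTerm f' p' := Prod.mk.inj h
    have hdiff : Set.range f \ {f p} = Set.range f' \ {f p} := by
      have hf := succAbove_image_range_deleteTerm f p
      have hf' := succAbove_image_range_deleteTerm f' p'
      rwa [← hg, ← hp, hf] at hf'
    have hrange : Set.range f = Set.range f' := by
      rw [← Set.insert_sdiff_self_of_mem (Set.mem_range_self p), hdiff,
        Set.insert_sdiff_self_of_mem (hp ▸ Set.mem_range_self p')]
    obtain rfl : f = f' := OrderEmbedding.range_inj.1 hrange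
    rw [f.injective hp]
  · rintro ⟨i, g⟩
    let s : Finset (Fin (n + 1)) := (univ.map g.toEmbedding).map i.succAboveEmb
    have hi : i ∉ s := by simp [s, Fin.succAbove_ne]
    let f := (insert i s).orderEmbOfFin (k := k + 1) (by simp [card_insert_of_notMem hi, s])
    have hf : Set.range f = insert i (i.succAbove '' Set.range g) := by
      simp [f, s]
    obtain ⟨p, hp⟩ : i ∈ Set.range f := hf ▸ Set.mem_insert _ _
    have hdelete : i.succAbove '' Set.range (deleteTerm f p) = i.succAbove '' Set.range g := by
      have := succAbove_image_range_deleteTerm f p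
      rw [hp, hf] at this
      rw [this, Set.insert_sdiff_self_of_notMem (by simp [Fin.succAbove_ne])]
    exact ⟨(f, p), Prod.ext hp (OrderEmbedding.range_inj.1
      (Fin.succAbove_right_injective.image_injective hdelete))⟩

theorem val_le_val_orderEmb (f : Fin k ↪o Fin n) (j : Fin k) : (j : ℕ) ≤ f j := by
  calc
    (j : ℕ) = #(Iio j) := (Fin.card_Iio j).symm
    _ ≤ #(Iio (f j)) := card_le_card_of_injOn f (by intro; simp) f.injective.injOn
    _ = f j := Fin.card_Iio (f j)

theorem displacement_add_val (f : Fin (k + 1) ↪o Fin (n + 1)) (p : Fin (k + 1)) :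
    displacement f + p = f p + displacement (deleteTerm f p) := by
  -- Values above `f p` sit exactly at positions after `p`: both are renumbered by one, or neither.
  have hterm (a : Fin k) :
      (f (p.succAbove a) : ℕ) - (p.succAbove a : ℕ) = (deleteTerm f p a : ℕ) - (a : ℕ) := by
    have same_side : p < p.succAbove a ↔ f p < (f p).succAbove (deleteTerm f p a) := by
      rw [succAbove_deleteTerm, f.lt_iff_lt]
    rw [Fin.lt_succAbove_iff_le_castSucc, Fin.lt_succAbove_iff_le_castSucc] at same_side
    rw [← succAbove_deleteTerm]
    by_cases hpa : p ≤ a.castSucc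
    · rw [Fin.succAbove_of_le_castSucc _ _ hpa,
        Fin.succAbove_of_le_castSucc _ _ (same_side.1 hpa), Fin.val_succ, Fin.val_succ,
        Nat.add_sub_add_right]
    · rw [Fin.succAbove_of_castSucc_lt _ _ (not_le.1 hpa),
        Fin.succAbove_of_castSucc_lt _ _ (not_le.1 (mt same_side.2 hpa)), Fin.val_castSucc,
        Fin.val_castSucc]
  have hp := val_le_val_orderEmb f p
  simp only [displacement, Fin.sum_univ_succAbove _ p, hterm]
  omega

end Deletion

section CullisDet

variable {F : Type*} [Field F] {n k : ℕ}

theorem cullisDet_eq_sum_orderEmb (X : Matrix (Fin n) (Fin k) F) :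
    cullisDet X =
      ∑ f : Fin k ↪o Fin n, (-1 : F) ^ displacement f * (X.submatrix f id).det := by
  refine (Fintype.sum_of_injective (fun f : Fin k ↪o Fin n => ⇑f) DFunLike.coe_injective _ _
    ?_ fun f => (if_pos f.strictMono).symm).symm
  exact fun f hf => if_neg fun hmono => hf ⟨OrderEmbedding.ofStrictMono f hmono, rfl⟩

theorem cullisDet_zero_columns (X : Matrix (Fin n) (Fin 0) F) : cullisDet X = 1 := by
  simp [cullisDet, Subsingleton.strictMono]

theorem cullisDet_succ_column (X : Matrix (Fin (n + 1)) (Fin (k + 1)) F) (j : Fin (k + 1)) :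
    cullisDet X = ∑ i : Fin (n + 1), (-1 : F) ^ ((i : ℕ) + (j : ℕ)) * X i j *
      cullisDet (X.submatrix i.succAbove j.succAbove) := by
  simp only [cullisDet_eq_sum_orderEmb, Matrix.det_succ_column _ j, Finset.mul_sum]
  rw [← Fintype.sum_prod_type', ← Fintype.sum_prod_type']
  refine Fintype.sum_bijective _ bijective_apply_deleteTerm _ _ fun ⟨f, p⟩ => ?_
  have hminor : ((X.submatrix f id).submatrix p.succAbove j.succAbove).det =
      ((X.submatrix (f p).succAbove j.succAbove).submatrix (deleteTerm f p) id).det := by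
    congr 1
    ext a b
    simp [succAbove_deleteTerm]
  have hsign : (-1 : F) ^ displacement f * (-1) ^ (p : ℕ) =
      (-1) ^ (f p : ℕ) * (-1) ^ displacement (deleteTerm f p) := by
    rw [← pow_add, ← pow_add, displacement_add_val]
  simp only [hminor, Matrix.submatrix_apply, id, pow_add]
  linear_combination (-1 : F) ^ (j : ℕ) * X (f p) j *
    ((X.submatrix (f p).succAbove j.succAbove).submatrix (deleteTerm f p) id).det * hsign

theorem cullisDet_eq_zero_of_const_column (hodd : Odd (n + k)) (X : Matrix (Fin n) (Fin k) F)
    (j : Fin k) (c : F) (hc : ∀ i, X i j = c) : cullisDet X = 0 := by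
  induction k generalizing n with
  | zero => exact j.elim0
  | succ k ih =>
    cases n with
    | zero => simp [cullisDet]
    | succ n =>
      cases k with
      | zero =>
        have hn : Even (n + 1) := by grind
        simp [cullisDet_succ_column X j, hc, cullisDet_zero_columns, ← Finset.sum_mul,
          Fin.sum_neg_one_pow, hn]
      | succ k =>
        obtain ⟨l, hl⟩ := exists_ne j
        obtain ⟨j', hj'⟩ := Fin.exists_succAbove_eq hl.symm
        rw [cullisDet_succ_column X l]
        refine Finset.sum_eq_zero fun i _ => ?_
        rw [ih (by grind) _ j' (by simp [hj', hc]), mul_zero]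

/-- The Cullis determinant as a multilinear function of the columns of the matrix; the argument
`u j` is the column `j`. -/
noncomputable def cullisDetColMultilinear (F : Type*) [Field F] (n k : ℕ) :
    MultilinearMap F (fun _ : Fin k => Fin n → F) F :=
  ∑ f : Fin k ↪o Fin n,
    (-1 : F) ^ displacement f •
      Matrix.detRowAlternating.toMultilinearMap.compLinearMap fun _ => LinearMap.funLeft F F f

theorem cullisDetColMultilinear_apply (u : Fin k → Fin n → F) :
    cullisDetColMultilinear F n k u = cullisDet (Matrix.of fun i j => u j i) := by
  rw [cullisDet_eq_sum_orderEmb, cullisDetColMultilinear, sum_apply]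
  refine Finset.sum_congr rfl fun f _ => ?_
  rw [← Matrix.det_transpose]
  rfl

theorem cullisDet_add_replicateRow (hodd : Odd (n + k)) (X : Matrix (Fin n) (Fin k) F)
    (v : Fin k → F) : cullisDet (X + Matrix.replicateRow (Fin n) v) = cullisDet X := by
  let u : Fin k → Fin n → F := fun j i => X i j
  let w : Fin k → Fin n → F := fun j _ => v j
  have mixed_eq_zero (s : Finset (Fin k)) (hs : s ≠ Finset.univ) :
      cullisDetColMultilinear F n k (s.piecewise u w) = 0 := by
    obtain ⟨j, hj⟩ : ∃ j, j ∉ s := by simpa [Finset.eq_univ_iff_forall] using hs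
    rw [cullisDetColMultilinear_apply]
    exact cullisDet_eq_zero_of_const_column hodd _ j (v j) fun i => by simp [w, hj]
  calc
    cullisDet (X + Matrix.replicateRow (Fin n) v) = cullisDetColMultilinear F n k (u + w) :=
      (cullisDetColMultilinear_apply _).symm
    _ = ∑ s : Finset (Fin k), cullisDetColMultilinear F n k (s.piecewise u w) :=
      MultilinearMap.map_add_univ _ u w
    _ = cullisDetColMultilinear F n k u := by
      rw [Fintype.sum_eq_single Finset.univ mixed_eq_zero, Finset.piecewise_univ]
    _ = cullisDet X := cullisDetColMultilinear_apply u

theorem cullisDet_eq_submatrix_castSucc (X : Matrix (Fin (n + 1)) (Fin k) F)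
    (hX : X (Fin.last n) = 0) : cullisDet X = cullisDet (X.submatrix Fin.castSucc id) := by
  simp only [cullisDet_eq_sum_orderEmb]
  refine (Fintype.sum_of_injective (fun g : Fin k ↪o Fin n => g.trans Fin.castSuccOrderEmb)
    ?_ _ _ ?_ fun g => rfl).symm
  · intro g g' h
    ext a
    simpa using congrArg (fun f => (f a : ℕ)) h
  · intro f hf
    obtain ⟨a, ha⟩ : ∃ a, f a = Fin.last n := by
      by_contra! hne
      refine hf ⟨OrderEmbedding.ofStrictMono (fun a => (f a).castPred (hne a)) ?_, ?_⟩
      · exact fun a b hab => OrderEmbedding.strictMono f hab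
      · ext; rfl
    rw [Matrix.det_eq_zero_of_row_eq_zero a fun j => by simp [ha, hX], mul_zero]

end CullisDet

/-- Lemma 4.4: if `n + k` is odd then `det_{n,k}(X) = det_{(n-1),k}(L⁻(X))`. -/
theorem stmt6 {F : Type*} [Field F] {n k : ℕ} (hk : 1 ≤ k) (hkn : k ≤ n)
    (hn : 2 ≤ n) (hodd : Odd (n + k)) (X : Matrix (Fin n) (Fin k) F) :
    cullisDet X = cullisDet (Lminus X) := by
  obtain ⟨m, rfl⟩ : ∃ m, n = m + 1 := ⟨n - 1, by omega⟩
  set Y := X - Matrix.replicateRow (Fin (m + 1)) (X (Fin.last m)) with hY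
  have last_row_zero : Y (Fin.last m) = 0 := by
    ext j
    simp only [hY, Matrix.sub_apply, Matrix.replicateRow_apply, sub_self, Pi.zero_apply]
  calc
    cullisDet X = cullisDet (Y + Matrix.replicateRow _ (X (Fin.last m))) := by
      rw [hY, sub_add_cancel]
    _ = cullisDet Y := cullisDet_add_replicateRow hodd Y _
    _ = cullisDet (Y.submatrix Fin.castSucc id) :=
      cullisDet_eq_submatrix_castSucc Y last_row_zero
    _ = cullisDet (Lminus X) := rfl
end

section
/- Let F be a field with more than k elements, let n > k ≥ 2 with n + k odd, and let T be a linear map on M_{n×k}(F) such that det_{n,k}(T(X)) = det_{n,k}(X) for all X and such that the image of T equals M^0_{n,k}(F). Then the kernel of T equals the radical of det_{n,k} (which equals W_{n,k}). -/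
/-!
A column `y` of a matrix in the radical annihilates `det_{n,k}`: the determinant vanishes on every
matrix having `y` among its columns. Let `τ` transpose adjacent rows `a` and `b`. As soon as one
column is supported on `{a, b}`, applying `τ` to the rows changes the sign of `det_{n,k}`: minors
on exactly one of the two rows are exchanged with opposite weights, minors on both change sign, and
minors on neither vanish. Applied to the columns `(y, e_a, e_R)`, this shows that `det_{n,k}`
vanishes on `(y ∘ τ, e_b, e_R)`, as it does on `(y, e_b, e_R)`. Since
`y - y ∘ τ = (y_a - y_b) (e_a - e_b)`, subtraction gives
`(y_a - y_b) det_{n,k} (e_a, e_b, e_R) = 0`, where the determinant is `±1`. Thus `y` is constant,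
and the radical lies in `W_{n,k}`.

The kernel of a map preserving `det_{n,k}` lies in the radical. As `W_{n,k}` is a complement of the
matrices whose last row is zero, rank-nullity turns both inclusions into equalities.
-/

theorem forall_eq_of_forall_covBy {α β : Type*} [LinearOrder α] [LocallyFiniteOrder α] {y : α → β}
    (hy : ∀ a b, a ⋖ b → y a = y b) (a b : α) : y a = y b := by
  wlog hab : a ≤ b generalizing a b
  · exact (this b a (le_of_not_ge hab)).symm
  induction le_iff_reflTransGen_covBy.mp hab with
  | refl => rfl
  | tail _ hbc ih => exact (ih (le_iff_reflTransGen_covBy.mpr ‹_›)).trans (hy _ _ hbc)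

theorem val_le_val_of_strictMono {n k : ℕ} {f : Fin k → Fin n} (hf : StrictMono f) (j : Fin k) :
    (j : ℕ) ≤ f j := by
  simpa only [Fin.card_Iio] using
    Finset.card_le_card_of_injOn f (s := Finset.Iio j) (t := Finset.Iio (f j))
      (fun i hi ↦ by simpa using hf (by simpa using hi)) hf.injective.injOn

theorem eq_of_strictMono_of_range_subset_s10 {ι α : Type*} [LinearOrder ι] [Finite ι]
    [PartialOrder α] {f g : ι → α} (hf : StrictMono f) (hg : StrictMono g)
    (h : Set.range g ⊆ Set.range f) : f = g := by
  refine (StrictMono.range_inj hf hg).mp (Set.eq_of_subset_of_ncard_le h ?_).symm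
  simp only [Set.ncard_range_of_injective, hf.injective, hg.injective, le_refl]

theorem exists_strictMono_pair_subset_range {α : Type*} [LinearOrder α] [Fintype α] {k : ℕ}
    (hk : 2 ≤ k) (hkα : k ≤ Fintype.card α) {a b : α} (hab : a ≠ b) :
    ∃ g : Fin k → α, StrictMono g ∧ {a, b} ⊆ Set.range g := by
  obtain ⟨s, hs, hcard⟩ := Finset.exists_superset_card_eq (s := {a, b}) (n := k)
    (by rwa [Finset.card_pair hab]) hkα
  refine ⟨s.orderEmbOfFin hcard, (s.orderEmbOfFin hcard).strictMono, ?_⟩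
  rwa [Finset.range_orderEmbOfFin, ← Finset.coe_pair, Finset.coe_subset]

section AdjacentSwap

open Equiv

variable {ι α : Type*} [DecidableEq α]

theorem swap_comp_swap_comp (a b : α) (f : ι → α) : swap a b ∘ swap a b ∘ f = f :=
  funext fun i ↦ swap_apply_self a b (f i)

theorem pair_subset_range_swap_comp {a b : α} {f : ι → α} :
    {a, b} ⊆ Set.range (swap a b ∘ f) ↔ {a, b} ⊆ Set.range f := by
  rw [Set.range_comp, ← Equiv.symm_image_subset, symm_swap, Set.image_pair, swap_apply_left,
    swap_apply_right, Set.pair_comm]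

theorem strictMono_swap_comp {ι α : Type*} [Preorder ι] [LinearOrder α] {a b : α} (hab : a ⋖ b)
    {f : ι → α} (hf : StrictMono f) (hpair : ¬{a, b} ⊆ Set.range f) :
    StrictMono (swap a b ∘ f) := by
  intro i j hij
  have hlt := hf hij
  have hne : ¬(f i = a ∧ f j = b) := fun h ↦
    hpair (Set.pair_subset ⟨i, h.1⟩ ⟨j, h.2⟩)
  have hbelow : ∀ c, c < b ↔ c ≤ a := fun _ ↦ hab.lt_iff_le_left
  have habove : ∀ c, a < c ↔ b ≤ c := fun _ ↦ hab.lt_iff_le_right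
  simp only [Function.comp_apply, swap_apply_def]
  grind

open Classical in
/-- The action of the transposition of `a` and `b` on subsets, in terms of their enumerations: a
subset containing both elements is fixed, so that a monotone enumeration stays monotone when `a`
and `b` are adjacent. -/
noncomputable def pairExchange (a b : α) (f : ι → α) : ι → α :=
  if {a, b} ⊆ Set.range f then f else swap a b ∘ f

theorem pairExchange_pairExchange (a b : α) (f : ι → α) :
    pairExchange a b (pairExchange a b f) = f := by
  by_cases hpair : {a, b} ⊆ Set.range f
  · simp only [pairExchange, hpair, if_true]
  · simp only [pairExchange, hpair, pair_subset_range_swap_comp, if_false, swap_comp_swap_comp]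

theorem strictMono_pairExchange {ι α : Type*} [Preorder ι] [LinearOrder α] {a b : α} (hab : a ⋖ b)
    {f : ι → α} (hf : StrictMono f) : StrictMono (pairExchange a b f) := by
  unfold pairExchange
  split_ifs with hpair
  · exact hf
  · exact strictMono_swap_comp hab hf hpair

theorem sub_comp_swap_eq_smul {R : Type*} [Ring R] (a b : α) (y : α → R) :
    y - y ∘ swap a b = (y a - y b) • (Pi.single a 1 - Pi.single b 1) := by
  ext i
  by_cases hia : i = a <;> by_cases hib : i = b <;>
    simp_all [swap_apply_of_ne_of_ne]

end AdjacentSwap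

section EnumSign

open Equiv

variable {n k : ℕ}

/-- The sign with which `det_{n,k}` weights the maximal minor on the rows `f 0 < ⋯ < f (k - 1)`. The
truncated subtraction is exact for strictly monotone `f`. -/
def enumSign (f : Fin k → Fin n) : ℤˣ :=
  (-1) ^ ∑ j, ((f j : ℕ) - (j : ℕ))

theorem enumSign_swap_comp_of_left_mem {a b : Fin n} (hab : a ⋖ b) {f : Fin k → Fin n}
    (hf : StrictMono f) (ha : a ∈ Set.range f) (hb : b ∉ Set.range f) :
    enumSign (swap a b ∘ f) = -enumSign f := by
  obtain ⟨r, rfl⟩ := ha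
  have hval : (b : ℕ) = f r + 1 := (Nat.covBy_iff_add_one_eq.mp (Fin.covBy_iff.mp hab)).symm
  have hoff : ∀ j ∈ Finset.univ.erase r, (swap (f r) b ∘ f) j = f j := fun j hj ↦
    swap_apply_of_ne_of_ne (hf.injective.ne (Finset.ne_of_mem_erase hj)) fun h ↦ hb ⟨j, h⟩
  have hr : (f r + 1 - r : ℕ) = (f r - r) + 1 := Nat.sub_add_comm (val_le_val_of_strictMono hf r)
  simp only [enumSign, ← Finset.prod_pow_eq_pow_sum,
    ← Finset.mul_prod_erase _ _ (Finset.mem_univ r)]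
  rw [Finset.prod_congr rfl fun j hj ↦ by rw [hoff j hj], Function.comp_apply, swap_apply_left,
    hval, hr, pow_succ, mul_neg_one, neg_mul]

theorem enumSign_swap_comp {a b : Fin n} (hab : a ⋖ b) {f : Fin k → Fin n} (hf : StrictMono f)
    (hmem : a ∈ Set.range f ∨ b ∈ Set.range f) (hpair : ¬{a, b} ⊆ Set.range f) :
    enumSign (swap a b ∘ f) = -enumSign f := by
  rcases hmem with ha | ⟨r, hr⟩
  · exact enumSign_swap_comp_of_left_mem hab hf ha fun hb ↦ hpair (Set.pair_subset ha hb)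
  · have ha : a ∈ Set.range (swap a b ∘ f) := ⟨r, by simp [hr]⟩
    have hb : b ∉ Set.range (swap a b ∘ f) := fun hb ↦
      hpair (pair_subset_range_swap_comp.mp (Set.pair_subset ha hb))
    have hswap := enumSign_swap_comp_of_left_mem hab (strictMono_swap_comp hab hf hpair) ha hb
    rw [swap_comp_swap_comp] at hswap
    rw [hswap, neg_neg]

end EnumSign

section CullisForm

open Equiv

variable {R : Type*} [CommRing R] {n k : ℕ}

open Classical in
/-- `det_{n,k}` as an alternating form in the columns, over any commutative ring. -/
noncomputable def cullisForm (R : Type*) [CommRing R] (n k : ℕ) : (Fin n → R) [⋀^Fin k]→ₗ[R] R :=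
  ∑ f : Fin k → Fin n with StrictMono f,
    enumSign f • Matrix.detRowAlternating.compLinearMap (LinearMap.funLeft R R f)

open Classical in
theorem cullisForm_apply (v : Fin k → Fin n → R) :
    cullisForm R n k v = ∑ f : Fin k → Fin n with StrictMono f,
      enumSign f • ((Matrix.of v).submatrix id f).det := by
  let evalAt : ((Fin n → R) [⋀^Fin k]→ₗ[R] R) →+ R :=
    { toFun := fun φ ↦ φ v, map_zero' := rfl, map_add' := fun _ _ ↦ rfl }
  exact map_sum evalAt _ _

theorem cullisDet_eq_cullisForm {F : Type*} [Field F] (X : Matrix (Fin n) (Fin k) F) :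
    cullisDet X = cullisForm F n k X.col := by
  rw [cullisDet, cullisForm_apply, Finset.sum_filter]
  refine Finset.sum_congr rfl fun f _ ↦ ?_
  rw [← Matrix.det_transpose (X.submatrix f id), enumSign, Units.smul_def]
  simp only [zsmul_eq_mul]
  push_cast
  rfl

theorem det_submatrix_swap_comp_of_pair_subset_range {m p : Type*} [Fintype m] [DecidableEq m]
    [DecidableEq p] (A : Matrix m p R) {a b : p} (hab : a ≠ b) {f : m → p}
    (hf : Function.Injective f) (hpair : {a, b} ⊆ Set.range f) :
    (A.submatrix id (swap a b ∘ f)).det = -(A.submatrix id f).det := by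
  obtain ⟨⟨i, rfl⟩, ⟨j, rfl⟩⟩ := Set.pair_subset_iff.mp hpair
  rw [hf.swap_comp]
  have hsign := Matrix.det_permute' (swap i j) (A.submatrix id f)
  rw [Perm.sign_swap (ne_of_apply_ne f hab)] at hsign
  simpa using hsign

theorem enumSign_smul_det_pairExchange {a b : Fin n} (hab : a ⋖ b) (v : Fin k → Fin n → R)
    {q : Fin k} (hq : ∀ i, i ≠ a → i ≠ b → v q i = 0) {f : Fin k → Fin n} (hf : StrictMono f) :
    enumSign f • ((Matrix.of v).submatrix id (swap a b ∘ f)).det =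
      -(enumSign (pairExchange a b f) •
        ((Matrix.of v).submatrix id (pairExchange a b f)).det) := by
  by_cases hpair : {a, b} ⊆ Set.range f
  · rw [pairExchange, if_pos hpair,
      det_submatrix_swap_comp_of_pair_subset_range _ hab.ne hf.injective hpair, smul_neg]
  rw [pairExchange, if_neg hpair]
  by_cases hmem : a ∈ Set.range f ∨ b ∈ Set.range f
  · rw [enumSign_swap_comp hab hf hmem hpair, Units.neg_smul, neg_neg]
  · obtain ⟨ha, hb⟩ := not_or.mp hmem
    have hrow (j : Fin k) : (Matrix.of v).submatrix id (swap a b ∘ f) q j = 0 := by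
      have hja : f j ≠ a := fun h ↦ ha ⟨j, h⟩
      have hjb : f j ≠ b := fun h ↦ hb ⟨j, h⟩
      simpa [swap_apply_of_ne_of_ne hja hjb] using hq (f j) hja hjb
    simp only [Matrix.det_eq_zero_of_row_eq_zero q hrow, smul_zero, neg_zero]

theorem cullisForm_comp_swap {a b : Fin n} (hab : a ⋖ b) (v : Fin k → Fin n → R) {q : Fin k}
    (hq : ∀ i, i ≠ a → i ≠ b → v q i = 0) :
    cullisForm R n k (fun j ↦ v j ∘ swap a b) = -cullisForm R n k v := by
  classical
  rw [cullisForm_apply, cullisForm_apply, ← Finset.sum_neg_distrib]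
  refine Finset.sum_nbij' (pairExchange a b) (pairExchange a b) ?_ ?_
    (fun f _ ↦ pairExchange_pairExchange a b f) (fun f _ ↦ pairExchange_pairExchange a b f) ?_
  · simpa using fun f ↦ strictMono_pairExchange hab
  · simpa using fun f ↦ strictMono_pairExchange hab
  · intro f hf
    exact enumSign_smul_det_pairExchange hab v hq (Finset.mem_filter.mp hf).2

theorem cullisForm_single {g : Fin k → Fin n} (hg : StrictMono g) :
    cullisForm R n k (fun j ↦ Pi.single (g j) 1) = enumSign g • (1 : R) := by
  classical
  rw [cullisForm_apply, Finset.sum_eq_single_of_mem g (by simpa using hg)]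
  · have hone : (Matrix.of fun j ↦ (Pi.single (g j) 1 : Fin n → R)).submatrix id g = 1 := by
      ext i j
      simp [Matrix.one_apply, Pi.single_apply, hg.injective.eq_iff, eq_comm]
    rw [hone, Matrix.det_one]
  · intro f hf hfg
    obtain ⟨_, ⟨j, rfl⟩, hj⟩ := Set.not_subset.mp
      (mt (eq_of_strictMono_of_range_subset_s10 (Finset.mem_filter.mp hf).2 hg) hfg)
    rw [Matrix.det_eq_zero_of_row_eq_zero j, smul_zero]
    exact fun i ↦ Pi.single_eq_of_ne (fun h ↦ hj ⟨i, h⟩) _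

theorem cullisForm_update_single_comp_swap {g : Fin k → Fin n} (hg : Function.Injective g)
    {p q : Fin k} (hcov : g p ⋖ g q) (y : Fin n → R) :
    cullisForm R n k
        (Function.update (fun j ↦ Pi.single (g j) 1) p (y ∘ swap (g p) (g q))) =
      -cullisForm R n k
        (Function.update (Function.update (fun j ↦ Pi.single (g j) 1) q (Pi.single (g p) 1)) p
          y) := by
  have hqp : q ≠ p := (ne_of_apply_ne g hcov.ne).symm
  rw [← cullisForm_comp_swap hcov _ (q := q)]
  · congr 1
    funext j
    obtain rfl | hjp := eq_or_ne j p
    · simp only [Function.update_self]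
    obtain rfl | hjq := eq_or_ne j q
    · simp only [Function.update_of_ne hjp, Function.update_self, Pi.single_comp_equiv, symm_swap,
        swap_apply_left]
    · simp only [Function.update_of_ne hjp, Function.update_of_ne hjq, Pi.single_comp_equiv,
        symm_swap, swap_apply_of_ne_of_ne (hg.ne hjp) (hg.ne hjq)]
  · intro i hi _
    rw [Function.update_of_ne hqp, Function.update_self, Pi.single_eq_of_ne hi]

theorem eq_of_covBy_of_forall_cullisForm_eq_zero (hk : 2 ≤ k) (hkn : k ≤ n) {y : Fin n → R}
    (hy : ∀ (v : Fin k → Fin n → R) (p : Fin k), v p = y → cullisForm R n k v = 0) {a b : Fin n}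
    (hab : a ⋖ b) : y a = y b := by
  obtain ⟨g, hg, hpair⟩ :=
    exists_strictMono_pair_subset_range hk (hkn.trans_eq (Fintype.card_fin n).symm) hab.ne
  obtain ⟨⟨p, rfl⟩, ⟨q, rfl⟩⟩ := Set.pair_subset_iff.mp hpair
  have hpq : p ≠ q := ne_of_apply_ne g hab.ne
  let e : Fin k → Fin n → R := fun j ↦ Pi.single (g j) 1
  have hyswap : cullisForm R n k (Function.update e p (y ∘ swap (g p) (g q))) = 0 := by
    rw [cullisForm_update_single_comp_swap hg.injective hab, hy _ p (Function.update_self ..),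
      neg_zero]
  have hdiff : cullisForm R n k (Function.update e p (e p - e q)) = enumSign g • (1 : R) := by
    rw [AlternatingMap.map_update_sub, Function.update_eq_self,
      AlternatingMap.map_update_self _ _ hpq, sub_zero, cullisForm_single hg]
  have hzero : (y (g p) - y (g q)) • enumSign g • (1 : R) = 0 := by
    rw [← hdiff, ← AlternatingMap.map_update_smul, ← sub_comp_swap_eq_smul,
      AlternatingMap.map_update_sub, hy _ p (Function.update_self ..), hyswap, sub_zero]
  rw [smul_comm, smul_eq_mul, mul_one, smul_eq_zero_iff_eq, sub_eq_zero] at hzero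
  exact hzero

end CullisForm

/-- The space `W_{n,k}` of matrices all of whose rows are equal. -/
def equalRows (m n R : Type*) [Semiring R] : Submodule R (Matrix m n R) where
  carrier := {Y | ∀ i i', Y i = Y i'}
  add_mem' hX hY i i' := congrArg₂ (· + ·) (hX i i') (hY i i')
  zero_mem' _ _ := rfl
  smul_mem' c _ hY i i' := congrArg (c • ·) (hY i i')

/-- The space of matrices whose row `i₀` is zero; it is `M^0_{n,k}` when `i₀` is the last row. -/
def zeroRow {m : Type*} (n R : Type*) [Semiring R] (i₀ : m) : Submodule R (Matrix m n R) where
  carrier := {X | ∀ q, X i₀ q = 0}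
  add_mem' hX hY q := by simp [hX q, hY q]
  zero_mem' _ := rfl
  smul_mem' c _ hX q := by simp [hX q]

theorem isCompl_equalRows_zeroRow {m n R : Type*} [Ring R] (i₀ : m) :
    IsCompl (equalRows m n R) (zeroRow n R i₀) := by
  constructor
  · refine Submodule.disjoint_def.mpr fun X hX hX₀ ↦ ?_
    ext i q
    rw [hX i i₀]
    exact hX₀ q
  · refine Submodule.codisjoint_iff_exists_add_eq.mpr fun X ↦
      ⟨Matrix.of fun _ ↦ X i₀, X - Matrix.of fun _ ↦ X i₀, fun _ _ ↦ rfl,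
        fun q ↦ sub_self (X i₀ q), add_sub_cancel _ _⟩

theorem ker_eq_of_ker_le_of_range_le_of_isCompl {K V : Type*} [DivisionRing K] [AddCommGroup V]
    [Module K V] [FiniteDimensional K V] {f : V →ₗ[K] V} {p q : Submodule K V}
    (hpq : IsCompl p q) (hker : LinearMap.ker f ≤ p) (hrange : LinearMap.range f ≤ q) :
    LinearMap.ker f = p := by
  have hrank := LinearMap.finrank_range_add_finrank_ker f
  have hdim := Submodule.finrank_add_eq_of_isCompl hpq
  have hle := Submodule.finrank_mono hrange
  exact Submodule.eq_of_le_of_finrank_le hker (by omega)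

section Radical

variable {n k : ℕ} {F : Type*} [Field F]

/-- The radical of `det_{n,k}`: the directions along which it is invariant. It is encoded as a plain
set, since its linear structure plays no part in the argument. -/
def cullisRadical (n k : ℕ) (F : Type*) [Field F] : Set (Matrix (Fin n) (Fin k) F) :=
  {Y | ∀ (A : Matrix (Fin n) (Fin k) F) (l : F), cullisDet (A + l • Y) = cullisDet A}

theorem cullisForm_eq_zero_of_mem_cullisRadical {Y : Matrix (Fin n) (Fin k) F}
    (hY : Y ∈ cullisRadical n k F) {v : Fin k → Fin n → F} {p j : Fin k}
    (hv : v p = Y.col j) : cullisForm F n k v = 0 := by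
  have hj (w : Fin k → Fin n → F) (hw : w j = Y.col j) : cullisForm F n k w = 0 := by
    have h := hY ((Matrix.of w).transpose - Y) 1
    rw [one_smul, sub_add_cancel, cullisDet_eq_cullisForm, cullisDet_eq_cullisForm] at h
    refine h.trans (AlternatingMap.map_coord_zero _ j ?_)
    ext i
    exact sub_eq_zero.mpr (congrFun hw i)
  have hswap := hj (v ∘ Equiv.swap p j) (by simpa using hv)
  rwa [AlternatingMap.map_perm, smul_eq_zero_iff_eq] at hswap

theorem cullisRadical_subset_equalRows (hk : 2 ≤ k) (hkn : k ≤ n) :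
    cullisRadical n k F ⊆ equalRows (Fin n) (Fin k) F := by
  intro Y hY i i'
  ext j
  refine forall_eq_of_forall_covBy (y := Y.col j) (fun a b hab ↦ ?_) i i'
  exact eq_of_covBy_of_forall_cullisForm_eq_zero hk hkn
    (fun v p hv ↦ cullisForm_eq_zero_of_mem_cullisRadical hY hv) hab

theorem ker_subset_cullisRadical {T : Matrix (Fin n) (Fin k) F →ₗ[F] Matrix (Fin n) (Fin k) F}
    (hT : ∀ X, cullisDet (T X) = cullisDet X) :
    (LinearMap.ker T : Set (Matrix (Fin n) (Fin k) F)) ⊆ cullisRadical n k F := by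
  intro Y hY A l
  rw [← hT (A + l • Y), map_add, map_smul, LinearMap.mem_ker.mp hY, smul_zero, add_zero, hT]

theorem stmt10_general (hk : 2 ≤ k) (hkn : k ≤ n)
    (T : Matrix (Fin n) (Fin k) F →ₗ[F] Matrix (Fin n) (Fin k) F)
    (hT : ∀ X, cullisDet (T X) = cullisDet X) (i₀ : Fin n)
    (hrange : LinearMap.range T ≤ zeroRow (Fin k) F i₀) :
    (LinearMap.ker T : Set (Matrix (Fin n) (Fin k) F)) = cullisRadical n k F ∧
      cullisRadical n k F = equalRows (Fin n) (Fin k) F := by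
  have hker_rad := ker_subset_cullisRadical hT
  have hrad_rows := cullisRadical_subset_equalRows (F := F) hk hkn
  have hker : LinearMap.ker T = equalRows (Fin n) (Fin k) F :=
    ker_eq_of_ker_le_of_range_le_of_isCompl (isCompl_equalRows_zeroRow i₀)
      (hker_rad.trans hrad_rows) hrange
  rw [hker] at hker_rad ⊢
  exact ⟨hker_rad.antisymm hrad_rows, hrad_rows.antisymm hker_rad⟩

end Radical

/-- Lemma 4.10(a): if `T` preserves `det_{n,k}` and its image is the space of
matrices with zero last row, then `ker T` equals the radical of `det_{n,k}`,
which equals `W_{n,k}`. -/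
theorem stmt10 {F : Type*} [Field F] {n k : ℕ} (hk : 2 ≤ k) (hkn : k < n)
    (hodd : Odd (n + k)) (hF : (k : Cardinal) < Cardinal.mk F)
    (T : Matrix (Fin n) (Fin k) F →ₗ[F] Matrix (Fin n) (Fin k) F)
    (hT : ∀ X, cullisDet (T X) = cullisDet X)
    (hImg : Set.range (⇑T) =
      {X : Matrix (Fin n) (Fin k) F | ∀ q : Fin k, X ⟨n - 1, by omega⟩ q = 0}) :
    (LinearMap.ker T : Set (Matrix (Fin n) (Fin k) F)) =
        {Y : Matrix (Fin n) (Fin k) F | ∀ (A : Matrix (Fin n) (Fin k) F) (l : F),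
          cullisDet (A + l • Y) = cullisDet A} ∧
      {Y : Matrix (Fin n) (Fin k) F | ∀ (A : Matrix (Fin n) (Fin k) F) (l : F),
          cullisDet (A + l • Y) = cullisDet A} =
        {Y : Matrix (Fin n) (Fin k) F | ∀ i i' : Fin n, Y i = Y i'} :=
  stmt10_general hk hkn.le T hT ⟨n - 1, by omega⟩ hImg.le
end
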